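/- arXiv:1907.08950 — 3 statements merged into one kernel-verified Lean document; each statement's English description precedes it below -/
import Mathlib

section
/- Let N ≥ 1 and let x : Fin N → ℝ be injective with (Polynomial.hermite N).eval (x_l) = 0 for every l, i.e. x_1,…,x_N are the N distinct real zeros of the N-th Hermite polynomial (so each zero is simple and the derivative of hermite N is nonzero there). Then for all natural numbers n ≠ m with n, m ≤ N−1: ∑_{l=1}^{N} (hermite n).eval(x_l) · (hermite m).eval(x_l) / ((Polynomial.derivative (hermite N)).eval(x_l))² = 0. -/
open Polynomial

/-!
Let `L f = ∑ l, f (x l) / (H N)' (x l) ^ 2`. Then `L (H N * f) = 0` for every `f`. Moreover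
`(H N)' = N * H (N - 1)`, so by Lagrange interpolation at the zeros of `H N`, the value of
`N * L (H (N - 1) * f)` is the coefficient of degree `N - 1` of `f` when `deg f < N`. Hence `H N`
and `H (N - 1)` are orthogonal for `L` to all polynomials of degree less than `N - 1`. Read
backwards, the recurrence `H (n + 2) = X * H (n + 1) - (n + 1) * H n` carries orthogonality down to
every `H n`, because `L (X * H (n + 1) * f) = L (H (n + 1) * (X * f))`.

Reading it backwards requires `n + 1 ≠ 0` in the field. If `n + 1 = 0`, then `(H (n + 1))' = 0`,
while the recurrence shows that `H (n + 1)` divides `H N`, which is then not separable.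
-/

section ThreeTermRecurrence

variable {R : Type*} [CommRing R]

/-- The recurrence characteristic of monic orthogonal polynomials. The coefficients `a n`, `b n`
are indexed by the lowest polynomial involved. -/
def ThreeTermRecurrence (a b : ℕ → R) (p : ℕ → R[X]) : Prop :=
  ∀ n, p (n + 2) = (X - C (a n)) * p (n + 1) - C (b n) * p n

theorem ThreeTermRecurrence.dvd_of_eq_zero {a b : ℕ → R} {p : ℕ → R[X]}
    (hp : ThreeTermRecurrence a b p) {n m : ℕ} (hb : b n = 0) (hnm : n + 1 ≤ m) :
    p (n + 1) ∣ p m := by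
  obtain ⟨k, rfl⟩ := Nat.exists_eq_add_of_le hnm
  induction k using Nat.twoStepInduction with
  | zero => exact dvd_rfl
  | one => simp [hp n, hb]
  | more k ih₀ ih₁ =>
    have hrec := hp (n + 1 + k)
    exact hrec ▸ dvd_sub ((ih₁ (by omega)).mul_left _) ((ih₀ (by omega)).mul_left _)

variable {M : Type*} [AddCommGroup M] [Module R M]

/-- `p` is orthogonal to all polynomials of degree less than `n`, for the bilinear form
`(f, g) ↦ L (f * g)` attached to a linear map `L`. -/
def OrthogonalToDegreeLT (L : R[X] →ₗ[R] M) (p : R[X]) (n : ℕ) : Prop :=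
  ∀ f : R[X], f.degree < n → L (p * f) = 0

theorem OrthogonalToDegreeLT.of_C_mul {L : R[X] →ₗ[R] M} {c : R} {p : R[X]} {n : ℕ}
    (hc : IsSMulRegular M c) (h : OrthogonalToDegreeLT L (C c * p) n) :
    OrthogonalToDegreeLT L p n := by
  intro f hf
  refine hc.right_eq_zero_of_smul ?_
  rw [← map_smul, ← C_mul', ← mul_assoc]
  exact h f hf

theorem ThreeTermRecurrence.orthogonalToDegreeLT_of_succ {a b : ℕ → R} {p : ℕ → R[X]}
    (hp : ThreeTermRecurrence a b p) {L : R[X] →ₗ[R] M} {n : ℕ} (hb : IsSMulRegular M (b n))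
    (h₂ : OrthogonalToDegreeLT L (p (n + 2)) n)
    (h₁ : OrthogonalToDegreeLT L (p (n + 1)) (n + 1)) :
    OrthogonalToDegreeLT L (p n) n := by
  refine OrthogonalToDegreeLT.of_C_mul hb fun f hf => ?_
  have hdeg : ((X - C (a n)) * f).degree < ((n + 1 : ℕ) : WithBot ℕ) := by
    calc
      _ ≤ 1 + f.degree := degree_mul_le_of_le (degree_X_sub_C_le (a n)) le_rfl
      _ < 1 + n := WithBot.add_lt_add_left WithBot.one_ne_bot hf
      _ = (n + 1 : ℕ) := by push_cast; exact add_comm _ _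
  have hrec : C (b n) * p n * f = p (n + 1) * ((X - C (a n)) * f) - p (n + 2) * f := by
    rw [hp n]
    ring
  rw [hrec, map_sub, h₁ _ hdeg, h₂ f hf, sub_zero]

theorem ThreeTermRecurrence.orthogonalToDegreeLT_of_le {a b : ℕ → R} {p : ℕ → R[X]}
    (hp : ThreeTermRecurrence a b p) {L : R[X] →ₗ[R] M} {n N : ℕ}
    (hb : ∀ k < N, IsSMulRegular M (b k))
    (h₁ : OrthogonalToDegreeLT L (p (N + 1)) (N + 1)) (h₀ : OrthogonalToDegreeLT L (p N) N)
    (hn : n ≤ N) : OrthogonalToDegreeLT L (p n) n := by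
  suffices h : OrthogonalToDegreeLT L (p (n + 1)) (n + 1) ∧ OrthogonalToDegreeLT L (p n) n from h.2
  induction hn using Nat.decreasingInduction with
  | self => exact ⟨h₁, h₀⟩
  | of_succ k hk ih =>
    have h₂ : OrthogonalToDegreeLT L (p (k + 2)) k := fun f hf =>
      ih.1 f (hf.trans (by exact_mod_cast (by omega : k < k + 2)))
    exact ⟨ih.2, hp.orthogonalToDegreeLT_of_succ (hb k hk) h₂ ih.2⟩

end ThreeTermRecurrence

section Quadrature

variable {R ι : Type*} [CommRing R] {s : Finset ι} {v : ι → R}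

/-- The quadrature rule `f ↦ ∑ i ∈ s, w i * f (v i)` with nodes `v` and weights `w`, as a linear
functional on polynomials. -/
noncomputable def quadrature (s : Finset ι) (v w : ι → R) : R[X] →ₗ[R] R :=
  ∑ i ∈ s, w i • leval (v i)

theorem quadrature_apply (w : ι → R) (f : R[X]) :
    quadrature s v w f = ∑ i ∈ s, w i * f.eval (v i) := by
  simp [quadrature]

theorem orthogonalToDegreeLT_quadrature_nodal (w : ι → R) (n : ℕ) :
    OrthogonalToDegreeLT (quadrature s v w) (Lagrange.nodal s v) n := by
  intro f _
  rw [quadrature_apply]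
  refine Finset.sum_eq_zero fun i hi => ?_
  rw [eval_mul, Lagrange.eval_nodal_at_node hi, zero_mul, mul_zero]

theorem eq_nodal_of_monic [IsDomain R] (hv : Set.InjOn v s) {p : R[X]} (hp : p.Monic)
    (hdeg : p.degree = s.card) (hzero : ∀ i ∈ s, p.eval (v i) = 0) : p = Lagrange.nodal s v := by
  refine eq_of_degree_le_of_eval_index_eq s hv hdeg.le (hdeg.trans Lagrange.degree_nodal.symm) ?_ ?_
  · rw [hp.leadingCoeff, Lagrange.nodal_monic.leadingCoeff]
  · intro i hi
    rw [hzero i hi, Lagrange.eval_nodal_at_node hi]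

end Quadrature

section SimpleNodes

variable {K ι : Type*} [Field K] {s : Finset ι} {v : ι → K}

theorem separable_nodal (hv : Set.InjOn v s) : (Lagrange.nodal s v).Separable :=
  separable_prod_X_sub_C_iff'.2 fun _ hi _ hj hij => hv hi hj hij

theorem sum_eval_div_eval_derivative_nodal (hv : Set.InjOn v s) {f : K[X]}
    (hf : f.degree < s.card) :
    ∑ i ∈ s, f.eval (v i) / (derivative (Lagrange.nodal s v)).eval (v i) =
      f.coeff (s.card - 1) := by
  classical
  rw [Lagrange.coeff_eq_sum hv hf]
  refine Finset.sum_congr rfl fun i hi => ?_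
  rw [Lagrange.eval_nodal_derivative_eval_node_eq hi, Lagrange.eval_nodal]

theorem orthogonalToDegreeLT_quadrature_derivative_nodal (hv : Set.InjOn v s) :
    OrthogonalToDegreeLT
      (quadrature s v fun i => ((derivative (Lagrange.nodal s v)).eval (v i) ^ 2)⁻¹)
      (derivative (Lagrange.nodal s v)) (s.card - 1) := by
  intro f hf
  calc
    _ = ∑ i ∈ s, f.eval (v i) / (derivative (Lagrange.nodal s v)).eval (v i) := by
      rw [quadrature_apply]
      refine Finset.sum_congr rfl fun i hi => ?_
      have hsimple : (derivative (Lagrange.nodal s v)).eval (v i) ≠ 0 :=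
        (separable_nodal hv).eval₂_derivative_ne_zero (.id K) (Lagrange.eval_nodal_at_node hi)
      rw [eval_mul]
      field_simp
    _ = f.coeff (s.card - 1) :=
      sum_eval_div_eval_derivative_nodal hv (hf.trans_le (by exact_mod_cast Nat.sub_le _ _))
    _ = 0 := coeff_eq_zero_of_degree_lt hf

end SimpleNodes

section Hermite

theorem derivative_hermite_succ (n : ℕ) :
    derivative (hermite (n + 1)) = C (n + 1 : ℤ) * hermite n := by
  induction n with
  | zero => simp
  | succ n ih =>
    calc
      _ = hermite (n + 1) + X * (C (n + 1 : ℤ) * hermite n) -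
          C (n + 1 : ℤ) * derivative (hermite n) := by
        rw [hermite_succ (n + 1), derivative_sub, derivative_mul, ih, derivative_C_mul,
          derivative_X, one_mul]
      _ = hermite (n + 1) + C (n + 1 : ℤ) * hermite (n + 1) := by
        rw [hermite_succ n]
        ring
      _ = C ((n + 1 : ℕ) + 1 : ℤ) * hermite (n + 1) := by
        rw [Nat.cast_succ, C_add (a := (n + 1 : ℤ)), C_1]
        ring

theorem hermite_add_two (n : ℕ) :
    hermite (n + 2) = X * hermite (n + 1) - C (n + 1 : ℤ) * hermite n := by
  rw [hermite_succ (n + 1), derivative_hermite_succ]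

theorem derivative_map_hermite_succ (R : Type*) [Ring R] (n : ℕ) :
    derivative ((hermite (n + 1)).map (Int.castRingHom R)) =
      C (n + 1 : R) * (hermite n).map (Int.castRingHom R) := by
  rw [derivative_map, derivative_hermite_succ]
  simp

theorem threeTermRecurrence_map_hermite (R : Type*) [CommRing R] :
    ThreeTermRecurrence (fun _ => 0) (fun n => (n + 1 : R))
      fun n => (hermite n).map (Int.castRingHom R) := by
  intro n
  simp [-hermite_succ, hermite_add_two]

theorem degree_map_hermite (R : Type*) [Ring R] [Nontrivial R] (n : ℕ) :
    ((hermite n).map (Int.castRingHom R)).degree = n := by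
  rw [(hermite_monic n).degree_map, degree_hermite]

variable {K : Type*} [Field K]

theorem natCast_add_one_ne_zero_of_separable_hermite {n N : ℕ}
    (hsep : ((hermite N).map (Int.castRingHom K)).Separable) (hn : n < N) :
    (n + 1 : K) ≠ 0 := by
  intro hcast
  have hdvd := (threeTermRecurrence_map_hermite K).dvd_of_eq_zero hcast hn
  have hunit : IsUnit ((hermite (n + 1)).map (Int.castRingHom K)) := by
    rw [← isCoprime_zero_right]
    simpa only [separable_def, derivative_map_hermite_succ, hcast, C_0, zero_mul] using
      hsep.of_dvd hdvd
  have hdeg := degree_eq_zero_of_isUnit hunit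
  rw [degree_map_hermite] at hdeg
  exact n.succ_ne_zero (by exact_mod_cast hdeg)

theorem orthogonalToDegreeLT_hermite {ι : Type*} {s : Finset ι} {v : ι → K} {n N : ℕ}
    (hv : Set.InjOn v s) (hs : s.card = N)
    (hzero : ∀ i ∈ s, ((hermite N).map (Int.castRingHom K)).eval (v i) = 0) (hn : n < N) :
    OrthogonalToDegreeLT
      (quadrature s v fun i =>
        (((derivative (hermite N)).map (Int.castRingHom K)).eval (v i) ^ 2)⁻¹)
      ((hermite n).map (Int.castRingHom K)) n := by
  obtain ⟨N, rfl⟩ := Nat.exists_eq_add_one_of_ne_zero hn.ne_bot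
  have hnodal : (hermite (N + 1)).map (Int.castRingHom K) = Lagrange.nodal s v :=
    eq_nodal_of_monic hv ((hermite_monic _).map _) (by rw [degree_map_hermite, hs]) hzero
  have hregular : ∀ k < N + 1, IsSMulRegular K (k + 1 : K) := fun k hk =>
    .of_ne_zero (natCast_add_one_ne_zero_of_separable_hermite (hnodal ▸ separable_nodal hv) hk)
  rw [← derivative_map]
  refine (threeTermRecurrence_map_hermite K).orthogonalToDegreeLT_of_le
    (fun k hk => hregular k (hk.trans N.lt_succ_self)) ?_ ?_ (Nat.lt_succ_iff.1 hn)
  · rw [hnodal]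
    exact orthogonalToDegreeLT_quadrature_nodal _ _
  · have hderiv := orthogonalToDegreeLT_quadrature_derivative_nodal hv
    rw [← hnodal, hs, Nat.add_sub_cancel] at hderiv
    refine .of_C_mul (hregular N N.lt_succ_self) ?_
    rwa [← derivative_map_hermite_succ]

theorem discrete_orthogonality_hermite_general {ι : Type*} {s : Finset ι} {v : ι → K} {N : ℕ}
    (hv : Set.InjOn v s) (hs : s.card = N)
    (hzero : ∀ i ∈ s, ((hermite N).map (Int.castRingHom K)).eval (v i) = 0)
    {n m : ℕ} (hnm : n ≠ m) (hn : n < N) (hm : m < N) :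
    ∑ i ∈ s, ((hermite n).map (Int.castRingHom K)).eval (v i) *
        ((hermite m).map (Int.castRingHom K)).eval (v i) /
        ((derivative (hermite N)).map (Int.castRingHom K)).eval (v i) ^ 2 = 0 := by
  wlog hlt : m < n generalizing n m
  · simpa only [mul_comm] using this hnm.symm hm hn (by omega)
  have hdeg : ((hermite m).map (Int.castRingHom K)).degree < n := by
    rw [degree_map_hermite]
    exact_mod_cast hlt
  simpa only [quadrature_apply, eval_mul, ← div_eq_inv_mul] using
    orthogonalToDegreeLT_hermite hv hs hzero hn _ hdeg

end Hermite

/-- **Discrete orthogonality relations for Hermite polynomials**: the sum of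
`H n · H m` over the `N` distinct zeros of the `N`-th Hermite polynomial, weighted by
`1/(H N)′²` at each zero, vanishes for distinct degrees `n ≠ m` below `N`. -/
theorem discrete_orthogonality_hermite
    (N : ℕ) (hN : 1 ≤ N)
    (x : Fin N → ℝ) (hx : Function.Injective x)
    (hzero : ∀ l, ((Polynomial.hermite N).map (Int.castRingHom ℝ)).eval (x l) = 0)
    (n m : ℕ) (hnm : n ≠ m) (hn : n ≤ N - 1) (hm : m ≤ N - 1) :
    ∑ l, ((Polynomial.hermite n).map (Int.castRingHom ℝ)).eval (x l) *
        ((Polynomial.hermite m).map (Int.castRingHom ℝ)).eval (x l) /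
        (((Polynomial.derivative (Polynomial.hermite N)).map (Int.castRingHom ℝ)).eval (x l)) ^ 2
      = 0 :=
  discrete_orthogonality_hermite_general hx.injOn (Finset.card_fin N) (fun l _ => hzero l) hnm
    (by omega) (by omega)
end

section
/- Let H_n be the physicists' Hermite polynomials, D = {d_1 < … < d_M} a finite set of positive integers, N ∈ ℕ with N ∉ D, Ξ_D = W[H_{d_1},…,H_{d_M}], P_{D,n} = W[H_{d_1},…,H_{d_M},H_n], Ñ = (∑_j d_j) − M(M+1)/2 + N. Assume P_{D,N} has degree Ñ and let η : Fin Ñ → ℂ be injective with P_{D,N}(η_l) = 0 and Ξ_D(η_l) ≠ 0 for every l. For j ∈ {1,…,M} and ε ∈ {0,…,d_j−1} \ D, let P_{D′(j,ε),N} = W[H_{d_1},…,H_{d_{j−1}},H_ε,H_{d_{j+1}},…,H_{d_M},H_N] be the extra lower degree polynomial obtained by replacing the j-th entry d_j by ε. Then: (a) for every m ∈ {0,…,N−1} \ D with m ≠ d_j + ε − N, ∑_{l=1}^{Ñ} P_{D,m}(η_l) · P_{D′(j,ε),N}(η_l) / ((P_{D,N})′(η_l))² = 0; and (b) for two such replacements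 (j,ε) and (j′,ε′) with d_j + ε ≠ d_{j′} + ε′, ∑_{l=1}^{Ñ} P_{D′(j,ε),N}(η_l) · P_{D′(j′,ε′),N}(η_l) / ((P_{D,N})′(η_l))² = 0. -/
/-!
For a finite set `S` of indices let `P` be the Wronskian of the Hermite polynomials indexed by `S`.
With `S = D ∪ {N}`, every polynomial paired in the two sums is, up to sign, the Wronskian `Q`
obtained from `P` by replacing some `s ∈ S` by a smaller `t`, and the summands are products of
residues `Q(η)/P'(η)` of two quotients `Q/P` at the simple zeros `η` of `P`.

By Jacobi's identity `P Q' - P' Q = f g`, where `g` is the Wronskian with `s` removed from `S` and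
`f` the one with `t` added. By Crum's theorem `f/P` and `g/P` are, up to factors `exp(±x²/2)`,
eigenfunctions of the Schrödinger operator with potential `x² - 2 (log P)''`. Their local expansions
at a zero `η` of `P` are therefore determined through second order, and those of `f g` depend on the
two eigenvalues only through their sum, which is `2 (s + t)` up to a shift. On the other hand
`Q/P = ∑ r_k / (x - η_k)` gives `P Q' - P' Q = - ∑ r_k (P / (x - η_k))²`. Comparing second
derivatives at the zeros of `P` shows that the residues `r_k` form an eigenvector, with eigenvalue
`s + t` up to a shift, of a symmetric matrix depending only on `P`. Eigenvectors of a symmetric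
matrix for distinct eigenvalues are orthogonal.
-/

open Polynomial

/-- The physicists' Hermite polynomials: `H_0 = 1`, `H_{n+1} = 2·X·H_n − H_n′`. -/
noncomputable def hermiteP : ℕ → Polynomial ℝ
  | 0 => 1
  | n + 1 => 2 * Polynomial.X * hermiteP n - Polynomial.derivative (hermiteP n)

/-- The Wronskian `W[f_1,…,f_m]`: determinant of the matrix whose `(i,j)` entry is the
`i`-th derivative of `f j` (indices starting from `0`). -/
noncomputable def wronskian {m : ℕ} (f : Fin m → Polynomial ℝ) : Polynomial ℝ :=
  (Matrix.of fun i j : Fin m => Polynomial.derivative^[(i : ℕ)] (f j)).det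

/-- The Krein–Adler polynomial `P_{D,n} = W[H_{d_1},…,H_{d_M},H_n]` based on the
physicists' Hermite polynomials. -/
noncomputable def KAHermite {M : ℕ} (d : Fin M → ℕ) (n : ℕ) : Polynomial ℝ :=
  wronskian (Fin.snoc (fun j => hermiteP (d j)) (hermiteP n))

/-- The denominator polynomial `Ξ_D = W[H_{d_1},…,H_{d_M}]`. -/
noncomputable def XiHermite {M : ℕ} (d : Fin M → ℕ) : Polynomial ℝ :=
  wronskian (fun j => hermiteP (d j))

/-! ### Jacobi's identity for Wronskians -/

section DesnanotJacobi

variable {R n : Type*} [CommRing R] [Fintype n] [DecidableEq n]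

/-- The minor of `M` formed by the core block together with the `i`-th bordering row and the `j`-th
bordering column. -/
def borderedMinor (M : Matrix (n ⊕ Fin 2) (n ⊕ Fin 2) R) (i j : Fin 2) : R :=
  (M.submatrix (Sum.map id fun _ : Fin 1 => i) (Sum.map id fun _ : Fin 1 => j)).det

lemma map_borderedMinor {S : Type*} [CommRing S] (φ : R →+* S)
    (M : Matrix (n ⊕ Fin 2) (n ⊕ Fin 2) R) (i j : Fin 2) :
    φ (borderedMinor M i j) = borderedMinor (M.map φ) i j :=
  RingHom.map_det φ _

lemma borderedMinor_eq_det_mul_schur (M : Matrix (n ⊕ Fin 2) (n ⊕ Fin 2) R)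
    [Invertible M.toBlocks₁₁] (i j : Fin 2) :
    borderedMinor M i j = M.toBlocks₁₁.det *
      (M.toBlocks₂₂ - M.toBlocks₂₁ * ⅟M.toBlocks₁₁ * M.toBlocks₁₂) i j := by
  have hblocks : M.submatrix (Sum.map id fun _ : Fin 1 => i) (Sum.map id fun _ : Fin 1 => j) =
      Matrix.fromBlocks M.toBlocks₁₁ (M.toBlocks₁₂.submatrix id fun _ => j)
        (M.toBlocks₂₁.submatrix (fun _ => i) id)
        (M.toBlocks₂₂.submatrix (fun _ => i) fun _ => j) := by
    ext (k | k) (l | l) <;> rfl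
  rw [borderedMinor, hblocks, Matrix.det_fromBlocks₁₁, Matrix.det_fin_one]
  rfl

lemma det_mul_det_toBlocks₁₁_of_invertible (M : Matrix (n ⊕ Fin 2) (n ⊕ Fin 2) R)
    [Invertible M.toBlocks₁₁] :
    M.det * M.toBlocks₁₁.det =
      borderedMinor M 0 0 * borderedMinor M 1 1 - borderedMinor M 0 1 * borderedMinor M 1 0 := by
  simp only [borderedMinor_eq_det_mul_schur]
  conv_lhs => rw [← M.fromBlocks_toBlocks, Matrix.det_fromBlocks₁₁, Matrix.det_fin_two]
  rw [Matrix.toBlocks_fromBlocks₁₁]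
  ring

lemma det_toBlocks₁₁_mvPolynomialX_ne_zero (m : Type*) :
    (Matrix.mvPolynomialX (n ⊕ m) (n ⊕ m) ℤ).toBlocks₁₁.det ≠ 0 := by
  classical
  intro h
  let φ := MvPolynomial.eval fun p : (n ⊕ m) × (n ⊕ m) => (1 : Matrix (n ⊕ m) (n ⊕ m) ℤ) p.1 p.2
  have hone : (Matrix.mvPolynomialX (n ⊕ m) (n ⊕ m) ℤ).toBlocks₁₁.map φ = 1 := by
    ext k l
    simp [φ, Matrix.toBlocks₁₁, Matrix.one_apply]
  have hdet := congrArg φ h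
  rw [map_zero, RingHom.map_det, RingHom.mapMatrix_apply, hone, Matrix.det_one] at hdet
  exact one_ne_zero hdet

/-- The **Desnanot–Jacobi identity**. It is enough to prove it for the matrix of indeterminates,
whose core is invertible over the field of fractions. -/
theorem det_mul_det_toBlocks₁₁ (M : Matrix (n ⊕ Fin 2) (n ⊕ Fin 2) R) :
    M.det * M.toBlocks₁₁.det =
      borderedMinor M 0 0 * borderedMinor M 1 1 - borderedMinor M 0 1 * borderedMinor M 1 0 := by
  let X := Matrix.mvPolynomialX (n ⊕ Fin 2) (n ⊕ Fin 2) ℤ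
  have generic : X.det * X.toBlocks₁₁.det =
      borderedMinor X 0 0 * borderedMinor X 1 1 - borderedMinor X 0 1 * borderedMinor X 1 0 := by
    let φ := algebraMap (MvPolynomial ((n ⊕ Fin 2) × (n ⊕ Fin 2)) ℤ)
      (FractionRing (MvPolynomial ((n ⊕ Fin 2) × (n ⊕ Fin 2)) ℤ))
    have hφ : Function.Injective φ := IsFractionRing.injective _ _
    have hcore : φ X.toBlocks₁₁.det = (X.map φ).toBlocks₁₁.det := RingHom.map_det φ _
    have : Invertible (X.map φ).toBlocks₁₁ := Matrix.invertibleOfIsUnitDet _ <| by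
      rw [← hcore, isUnit_iff_ne_zero, map_ne_zero_iff φ hφ]
      exact det_toBlocks₁₁_mvPolynomialX_ne_zero (Fin 2)
    apply hφ
    simpa only [map_mul, map_sub, map_borderedMinor, hcore, RingHom.map_det,
      RingHom.mapMatrix_apply] using det_mul_det_toBlocks₁₁_of_invertible (X.map φ)
  let ψ := MvPolynomial.eval₂Hom (Int.castRingHom R) fun p : (n ⊕ Fin 2) × (n ⊕ Fin 2) => M p.1 p.2
  have hX : X.map ψ = M := Matrix.mvPolynomialX_map_eval₂ _ M
  have hcore : ψ X.toBlocks₁₁.det = (X.map ψ).toBlocks₁₁.det := RingHom.map_det ψ _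
  simpa only [map_mul, map_sub, map_borderedMinor, hcore, RingHom.map_det, RingHom.mapMatrix_apply,
    hX] using congrArg ψ generic

end DesnanotJacobi

/-- The matrix of derivatives of the polynomials `f j` of the orders `e i`. Its minors are the
Wronskians of the `f j` and the derivatives of these. -/
noncomputable def derivativeMatrix {R ι κ : Type*} [Semiring R] (e : ι → ℕ) (f : κ → R[X]) :
    Matrix ι κ R[X] :=
  Matrix.of fun i j => derivative^[e i] (f j)

lemma derivative_det {R n : Type*} [CommRing R] [Fintype n] [DecidableEq n]
    (A : Matrix n n R[X]) :
    derivative A.det = ∑ i, (A.updateRow i fun j => derivative (A i j)).det := by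
  simp only [← Matrix.det_transpose A, ← Matrix.det_transpose (A.updateRow _ _),
    Matrix.det_apply', derivative_sum]
  rw [Finset.sum_comm]
  refine Finset.sum_congr rfl fun σ _ => ?_
  rw [← Finset.mul_sum, derivative_mul, derivative_intCast, zero_mul, zero_add,
    derivative_prod_finset]
  refine congrArg _ (Finset.sum_congr rfl fun i _ => ?_)
  rw [← Finset.mul_prod_erase Finset.univ _ (Finset.mem_univ i), mul_comm]
  congr 1
  · simp
  · refine Finset.prod_congr rfl fun k hk => ?_
    simp [Matrix.updateRow_ne (Finset.ne_of_mem_erase hk)]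

local notation "W[" f "]" => (_root_.wronskian f : ℝ[X])
local notation "W[" f "," g "]" => (_root_.wronskian (Fin.snoc f g : Fin (_ + 1) → ℝ[X]) : ℝ[X])
local notation "W[" f "," g "," h "]" => W[(Fin.snoc f g : Fin (_ + 1) → ℝ[X]),h]

lemma wronskian_append {K m : ℕ} (a : Fin K → ℝ[X]) (b : Fin m → ℝ[X]) :
    W[Fin.append a b] =
      (derivativeMatrix (Sum.elim Fin.val fun i : Fin m => K + (i : ℕ)) (Sum.elim a b)).det := by
  rw [_root_.wronskian, ← Matrix.det_submatrix_equiv_self finSumFinEquiv]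
  congr 1
  ext (i | i) (j | j) <;> simp [derivativeMatrix]

lemma wronskian_snoc {K : ℕ} (a : Fin K → ℝ[X]) (h : ℝ[X]) :
    W[a,h] = (derivativeMatrix (Sum.elim Fin.val fun _ : Fin 1 => K)
      (Sum.elim a fun _ : Fin 1 => h)).det := by
  rw [← Fin.append_right_eq_snoc a fun _ => h, wronskian_append]
  simp

lemma wronskian_snoc_snoc {K : ℕ} (a : Fin K → ℝ[X]) (h₁ h₂ : ℝ[X]) :
    W[a,h₁,h₂] = (derivativeMatrix (Sum.elim Fin.val fun i : Fin 2 => K + (i : ℕ))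
      (Sum.elim a ![h₁, h₂])).det := by
  rw [← wronskian_append]
  congr 1
  ext1 k
  refine Fin.addCases (m := K) (n := 2) (fun k => ?_) (fun k => ?_) k
  · rw [Fin.append_left]
    exact (Fin.snoc_castSucc ..).trans (Fin.snoc_castSucc ..)
  · rw [Fin.append_right]
    fin_cases k
    · exact (Fin.snoc_castSucc ..).trans (Fin.snoc_last ..)
    · exact Fin.snoc_last ..

/-- Differentiating any row of the Wronskian but the last reproduces the next row. -/
lemma derivative_wronskian_snoc {K : ℕ} (a : Fin K → ℝ[X]) (h : ℝ[X]) :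
    derivative W[a,h] = (derivativeMatrix (Sum.elim Fin.val fun _ : Fin 1 => K + 1)
      (Sum.elim a fun _ : Fin 1 => h)).det := by
  rw [_root_.wronskian, derivative_det, Fin.sum_univ_castSucc, Finset.sum_eq_zero, zero_add]
  · rw [← Matrix.det_submatrix_equiv_self finSumFinEquiv]
    congr 1
    have hcast (k : Fin K) : finSumFinEquiv (Sum.inl k) = (k.castSucc : Fin (K + 1)) := rfl
    have hlast (k : Fin 1) : finSumFinEquiv (Sum.inr k) = Fin.last K := by
      rw [Subsingleton.elim k 0]
      rfl
    ext (i | i) (j | j) <;>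
      simp only [derivativeMatrix, Matrix.submatrix_apply, Matrix.updateRow_apply, Matrix.of_apply,
        Sum.elim_inl, Sum.elim_inr, hcast, hlast, (Fin.castSucc_lt_last _).ne, if_true, if_false,
        Fin.snoc_castSucc, Fin.snoc_last, Fin.val_castSucc, Fin.val_last,
        Function.iterate_succ_apply']
  · intro i _
    refine Matrix.det_zero_of_row_eq (i := i.castSucc) (j := i.succ) Fin.castSucc_lt_succ.ne ?_
    ext1 j
    rw [Matrix.updateRow_self, Matrix.updateRow_ne Fin.castSucc_lt_succ.ne']
    simp [Function.iterate_succ_apply']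

theorem wronskian_snoc_snoc_mul {K : ℕ} (a : Fin K → ℝ[X]) (h₁ h₂ : ℝ[X]) :
    W[a,h₁,h₂] * W[a] = Polynomial.wronskian W[a,h₁] W[a,h₂] := by
  let M : Matrix (Fin K ⊕ Fin 2) (Fin K ⊕ Fin 2) ℝ[X] :=
    derivativeMatrix (Sum.elim Fin.val fun i => K + (i : ℕ)) (Sum.elim a ![h₁, h₂])
  have hminor (i j : Fin 2) : borderedMinor M i j =
      (derivativeMatrix (Sum.elim Fin.val fun _ : Fin 1 => K + (i : ℕ))
        (Sum.elim a fun _ : Fin 1 => ![h₁, h₂] j)).det := by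
    rw [borderedMinor]
    congr 1
    ext (k | k) (l | l) <;> rfl
  have hM : M.det * W[a] = _ := det_mul_det_toBlocks₁₁ M
  rw [wronskian_snoc_snoc, hM, Polynomial.wronskian, derivative_wronskian_snoc,
    derivative_wronskian_snoc, wronskian_snoc, wronskian_snoc]
  simp only [hminor, Matrix.cons_val_zero, Matrix.cons_val_one, Fin.val_zero, Fin.val_one, add_zero]
  ring

lemma wronskian_comp_perm {m : ℕ} (f : Fin m → ℝ[X]) (σ : Equiv.Perm (Fin m)) :
    W[f ∘ σ] = ((Equiv.Perm.sign σ : ℤ) : ℝ[X]) * W[f] :=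
  Matrix.det_permute' σ (derivativeMatrix Fin.val f)

lemma exists_sign_wronskian_update {K : ℕ} (f : Fin (K + 1) → ℝ[X]) (i : Fin (K + 1)) :
    ∃ s : ℤˣ, ∀ u, W[Function.update f i u] = ((s : ℤ) : ℝ[X]) * W[i.removeNth f,u] := by
  let σ : Equiv.Perm (Fin (K + 1)) := (finSuccEquiv' i).trans (finSuccEquiv' (Fin.last K)).symm
  refine ⟨Equiv.Perm.sign σ, fun u => ?_⟩
  rw [← wronskian_comp_perm]
  congr 1
  ext1 k
  cases k using i.succAboveCases <;> simp [σ, Fin.removeNth]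

/-! ### Degrees of Wronskians -/

lemma natDegree_X_mul_derivative_le {R : Type*} [Semiring R] (p : R[X]) :
    (X * derivative p).natDegree ≤ p.natDegree := by
  rcases h : p.natDegree with _ | n
  · rw [eq_C_of_natDegree_eq_zero h]
    simp
  · refine natDegree_mul_le.trans ?_
    have := natDegree_derivative_le p
    have := natDegree_X_le (R := R)
    omega

lemma coeff_natDegree_X_mul_derivative {R : Type*} [CommRing R] (p : R[X]) :
    (X * derivative p).coeff p.natDegree = p.natDegree * p.leadingCoeff := by
  rcases h : p.natDegree with _ | n
  · simp
  · rw [coeff_X_mul, coeff_derivative, leadingCoeff, h]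
    push_cast
    ring

lemma coeff_X_mul_wronskian {R : Type*} [CommRing R] (p q : R[X]) :
    (X * Polynomial.wronskian p q).coeff (p.natDegree + q.natDegree) =
      ((q.natDegree : R) - p.natDegree) * (p.leadingCoeff * q.leadingCoeff) := by
  rw [show X * Polynomial.wronskian p q = p * (X * derivative q) - (X * derivative p) * q by
      rw [Polynomial.wronskian]; ring, coeff_sub,
    coeff_mul_add_eq_of_natDegree_le le_rfl (natDegree_X_mul_derivative_le q),
    coeff_mul_add_eq_of_natDegree_le (natDegree_X_mul_derivative_le p) le_rfl,
    coeff_natDegree_X_mul_derivative, coeff_natDegree_X_mul_derivative]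
  simp only [leadingCoeff]
  ring

lemma natDegree_wronskian_add_one {R : Type*} [CommRing R] [IsDomain R] [CharZero R] {p q : R[X]}
    (hp : p ≠ 0) (hq : q ≠ 0) (hne : p.natDegree ≠ q.natDegree) :
    Polynomial.wronskian p q ≠ 0 ∧
      (Polynomial.wronskian p q).natDegree + 1 = p.natDegree + q.natDegree := by
  have hcoeff : (X * Polynomial.wronskian p q).coeff (p.natDegree + q.natDegree) ≠ 0 := by
    rw [coeff_X_mul_wronskian]
    refine mul_ne_zero (sub_ne_zero.mpr fun h => hne ?_)
      (mul_ne_zero (leadingCoeff_ne_zero.mpr hp) (leadingCoeff_ne_zero.mpr hq))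
    exact_mod_cast h.symm
  have hW : Polynomial.wronskian p q ≠ 0 := by
    intro h
    simp [h] at hcoeff
  refine ⟨hW, le_antisymm (natDegree_wronskian_lt_add hW) ?_⟩
  rw [← natDegree_X_mul hW]
  exact le_natDegree_of_ne_zero hcoeff

lemma natDegree_wronskian_snoc_snoc {K : ℕ} {a : Fin K → ℝ[X]} {p q : ℝ[X]}
    (ha : W[a] ≠ 0) (hp : W[a,p] ≠ 0) (hq : W[a,q] ≠ 0)
    (hne : W[a,p].natDegree ≠ W[a,q].natDegree) :
    W[a,p,q] ≠ 0 ∧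
      W[a,p,q].natDegree + W[a].natDegree + 1 = W[a,p].natDegree + W[a,q].natDegree := by
  obtain ⟨hW, hdeg⟩ := natDegree_wronskian_add_one hp hq hne
  rw [← wronskian_snoc_snoc_mul] at hW hdeg
  have hpq := left_ne_zero_of_mul hW
  rw [natDegree_mul hpq ha] at hdeg
  exact ⟨hpq, hdeg⟩

theorem natDegree_wronskian_add_choose {m : ℕ} (f : Fin m → ℝ[X]) (hf : ∀ k, f k ≠ 0)
    (hdeg : Function.Injective fun k => (f k).natDegree) :
    W[f] ≠ 0 ∧ W[f].natDegree + m.choose 2 = ∑ k, (f k).natDegree := by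
  induction m using Nat.twoStepInduction with
  | zero => simp [_root_.wronskian]
  | one => simpa [_root_.wronskian] using hf 0
  | more m ih ih' =>
    obtain ⟨b, p, q, rfl⟩ : ∃ (b : Fin m → ℝ[X]) (p q : ℝ[X]),
        f = Fin.snoc (Fin.snoc b p : Fin (m + 1) → ℝ[X]) q :=
      ⟨Fin.init (Fin.init f), Fin.init f (Fin.last m), f (Fin.last (m + 1)), by simp⟩
    have hcomp {k : ℕ} (a : Fin k → ℝ[X]) (u : ℝ[X]) :
        (fun i => ((Fin.snoc a u : Fin (k + 1) → ℝ[X]) i).natDegree) =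
          Fin.snoc (fun i => (a i).natDegree) u.natDegree :=
      Fin.comp_snoc natDegree a u
    simp only [Fin.forall_fin_succ', Fin.snoc_castSucc, Fin.snoc_last] at hf
    obtain ⟨⟨hb, hp⟩, hq⟩ := hf
    simp only [hcomp, Fin.snoc_injective_iff, Fin.range_snoc, Set.mem_insert_iff, not_or] at hdeg
    obtain ⟨⟨hbdeg, hpb⟩, hqp, hqb⟩ := hdeg
    obtain ⟨hW, hWdeg⟩ := ih b hb hbdeg
    have single {u : ℝ[X]} (hu : u ≠ 0) (hub : u.natDegree ∉ Set.range fun k => (b k).natDegree) :=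
      ih' (Fin.snoc b u) (by simp [Fin.forall_fin_succ', hb, hu])
        (by rw [hcomp]; exact Fin.snoc_injective_iff.mpr ⟨hbdeg, hub⟩)
    obtain ⟨hWp, hWpdeg⟩ := single hp hpb
    obtain ⟨hWq, hWqdeg⟩ := single hq hqb
    have hchoose : (m + 1).choose 2 = m.choose 2 + m := by
      rw [Nat.choose_succ_succ', Nat.choose_one_right, add_comm]
    have hchoose' : (m + 2).choose 2 = (m + 1).choose 2 + (m + 1) := by
      rw [Nat.choose_succ_succ', Nat.choose_one_right, add_comm]
    simp only [Fin.sum_univ_castSucc, Fin.snoc_castSucc, Fin.snoc_last] at hWpdeg hWqdeg ⊢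
    obtain ⟨hWpq, hWpqdeg⟩ := natDegree_wronskian_snoc_snoc hW hWp hWq (by omega)
    exact ⟨hWpq, by omega⟩

/-! ### The bilinear eigenvalue equation and Crum's theorem -/

section Hirota

variable {R : Type*} [CommRing R] {a lam mu : R} {f g p q r : R[X]}

/-- The bilinear form of the eigenvalue equation
`y'' - a x y' + (2 (log g)'' + lam) y = 0` for `y = f / g`; in Hirota's notation,
`D²(f·g) - a x D(f·g) + lam f g = 0`. Up to the factor `exp(-a x²/4)`, `y` is then an eigenfunction
of the Schrödinger operator with potential `a² x²/4 - 2 (log g)''`. -/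
def Hirota (a lam : R) (f g : R[X]) : Prop :=
  derivative (derivative f) * g - 2 * derivative f * derivative g + f * derivative (derivative g)
    - C a * X * (derivative f * g - f * derivative g) + C lam * (f * g) = 0

lemma Hirota.symm (h : Hirota a lam f g) : Hirota (-a) lam g f := by
  unfold Hirota at h ⊢
  rw [C_neg]
  linear_combination h

lemma Hirota.neg_left (h : Hirota a lam f g) : Hirota a lam (-f) g := by
  unfold Hirota at h ⊢
  simp only [derivative_neg]
  linear_combination -h

lemma Hirota.neg_right (h : Hirota a lam f g) : Hirota a lam f (-g) := by
  simpa using h.symm.neg_left.symm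

lemma Hirota.map {S : Type*} [CommRing S] (φ : R →+* S) (h : Hirota a lam f g) :
    Hirota (φ a) (φ lam) (f.map φ) (g.map φ) := by
  have h' := congrArg (Polynomial.map φ) h
  simpa [Hirota, derivative_map] using h'

/-- If `r / p` is the Darboux transform of `q / g` by `p / g`, then multiplying by the square of the
gauge factor `p / g` and differentiating inverts the transformation up to a constant. -/
lemma Hirota.darboux_firstOrder [IsDomain R] (hg : g ≠ 0) (hr : r * g = Polynomial.wronskian p q)
    (hp : Hirota a lam p g) (hq : Hirota a mu q g) :
    derivative r * g - r * derivative g - C a * X * (r * g) + C (mu - lam) * (p * q) = 0 := by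
  unfold Hirota at hp hq
  rw [Polynomial.wronskian] at hr
  have hr' := congrArg derivative hr
  simp only [derivative_mul, derivative_sub] at hr'
  refine (mul_eq_zero.mp ?_).resolve_left hg
  rw [C_sub]
  linear_combination p * hq - q * hp + g * hr' - (2 * derivative g + C a * X * g) * hr

theorem Hirota.darboux [IsDomain R] (hg : g ≠ 0) (hr : r * g = Polynomial.wronskian p q)
    (hp : Hirota a lam p g) (hq : Hirota a mu q g) : Hirota a (mu - a) r p := by
  have h := Hirota.darboux_firstOrder hg hr hp hq
  have h' := congrArg derivative h
  simp only [derivative_add, derivative_sub, derivative_mul, derivative_X, derivative_C,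
    derivative_zero] at h'
  unfold Hirota at hp ⊢
  rw [Polynomial.wronskian] at hr
  refine (mul_eq_zero.mp ?_).resolve_left hg
  rw [C_sub] at h h' ⊢
  linear_combination p * h' - 2 * derivative p * h + r * hp + (C mu - C lam) * p * hr

end Hirota

/-- **Crum's theorem**. The degree condition makes the Wronskians of all initial segments of `f`
nonzero, so that `W[f,h]` is reached from `h` by successive Darboux transformations. -/
theorem hirota_wronskian_snoc {a mu : ℝ} {K : ℕ} (f : Fin K → ℝ[X]) (hf : ∀ k, f k ≠ 0)
    (hdeg : Function.Injective fun k => (f k).natDegree) {lam : Fin K → ℝ}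
    (hfH : ∀ k, Hirota a (lam k) (f k) 1) {h : ℝ[X]} (hH : Hirota a mu h 1) :
    Hirota a (mu - K * a) W[f,h] W[f] := by
  induction K generalizing mu h with
  | zero => simpa [_root_.wronskian, Fin.snoc] using hH
  | succ K ih =>
    obtain ⟨b, p, rfl⟩ : ∃ (b : Fin K → ℝ[X]) (p : ℝ[X]), f = Fin.snoc b p :=
      ⟨Fin.init f, f (Fin.last K), (Fin.snoc_init_self f).symm⟩
    have hb (k : Fin K) : b k ≠ 0 := by simpa using hf k.castSucc
    have hbdeg : Function.Injective fun k => (b k).natDegree := by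
      simpa [Function.comp_def] using hdeg.comp (Fin.castSucc_injective K)
    have hbH (k : Fin K) : Hirota a (lam k.castSucc) (b k) 1 := by simpa using hfH k.castSucc
    have hpH : Hirota a (lam (Fin.last K)) p 1 := by simpa using hfH (Fin.last K)
    have hW := (natDegree_wronskian_add_choose b hb hbdeg).1
    have key := Hirota.darboux hW (wronskian_snoc_snoc_mul b p h) (ih b hb hbdeg hbH hpH)
      (ih b hb hbdeg hbH hH)
    convert key using 1
    push_cast
    ring

/-- `(Q/P)'` is the product of two eigenfunctions for the potential `a² x²/4 - 2 (log P)''`, namely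
`(f/P) exp(-a x²/4)` and `(g/P) exp(a x²/4)`, and `σ` is the sum of their eigenvalues (up to a
shift). -/
def HasEigenproductDeriv {R : Type*} [CommRing R] (a σ : R) (P Q : R[X]) : Prop :=
  ∃ (f g : R[X]) (lam mu : R), f * g = Polynomial.wronskian P Q ∧
    Hirota a lam f P ∧ Hirota (-a) mu g P ∧ lam + mu = σ

lemma HasEigenproductDeriv.neg {R : Type*} [CommRing R] {a σ : R} {P Q : R[X]}
    (h : HasEigenproductDeriv a σ P Q) : HasEigenproductDeriv a σ (-P) (-Q) := by
  obtain ⟨f, g, lam, mu, hfg, hf, hg, hσ⟩ := h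
  refine ⟨f, g, lam, mu, ?_, hf.neg_right, hg.neg_right, hσ⟩
  rw [wronskian_neg_left, wronskian_neg_right, neg_neg, hfg]

lemma HasEigenproductDeriv.map {R S : Type*} [CommRing R] [CommRing S] (φ : R →+* S) {a σ : R}
    {P Q : R[X]} (h : HasEigenproductDeriv a σ P Q) :
    HasEigenproductDeriv (φ a) (φ σ) (P.map φ) (Q.map φ) := by
  obtain ⟨f, g, lam, mu, hfg, hf, hg, hσ⟩ := h
  refine ⟨f.map φ, g.map φ, φ lam, φ mu, ?_, hf.map φ, ?_, by rw [← hσ, map_add]⟩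
  · rw [← Polynomial.map_mul, hfg]
    simp [Polynomial.wronskian, derivative_map]
  · simpa using hg.map φ

theorem hasEigenproductDeriv_wronskian_update {a mu : ℝ} {K : ℕ} {f : Fin (K + 1) → ℝ[X]}
    (hf : ∀ k, f k ≠ 0) (hdeg : Function.Injective fun k => (f k).natDegree)
    {lam : Fin (K + 1) → ℝ} (hfH : ∀ k, Hirota a (lam k) (f k) 1) (i : Fin (K + 1)) {u : ℝ[X]}
    (hu : Hirota a mu u 1) :
    HasEigenproductDeriv a (lam i + mu - (2 * K + 1) * a) W[f] W[Function.update f i u] := by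
  let b : Fin K → ℝ[X] := i.removeNth f
  have hbdeg : Function.Injective fun k => (b k).natDegree :=
    hdeg.comp i.succAbove_right_injective
  have crum {h : ℝ[X]} {nu : ℝ} (hH : Hirota a nu h 1) :=
    hirota_wronskian_snoc b (fun _ => hf _) hbdeg (fun _ => hfH _) hH
  have hW : W[b] ≠ 0 := (natDegree_wronskian_add_choose b (fun _ => hf _) hbdeg).1
  have hJ := wronskian_snoc_snoc_mul b (f i) u
  have key : HasEigenproductDeriv a (lam i + mu - (2 * K + 1) * a) W[b,f i] W[b,u] :=
    ⟨_, _, _, _, hJ, (crum (hfH i)).darboux hW hJ (crum hu), (crum (hfH i)).symm, by ring⟩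
  obtain ⟨s, hs⟩ := exists_sign_wronskian_update f i
  rw [← Function.update_eq_self i f, Function.update_idem, hs, hs]
  rcases Int.units_eq_one_or s with rfl | rfl
  · simpa using key
  · simpa using key.neg

/-! ### Second-order expansions at a zero -/

section Jets

variable {R : Type*} [CommRing R] {a lam mu σ : R} {f g P Q : R[X]} {x : R}

lemma Hirota.eval_derivative_at_zero (h : Hirota a lam f P) (hx : P.eval x = 0) :
    2 * (derivative P).eval x * (derivative f).eval x =
      f.eval x * ((derivative (derivative P)).eval x + a * x * (derivative P).eval x) := by
  have h' := congrArg (eval x) h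
  simp only [eval_add, eval_sub, eval_mul, eval_X, eval_C, eval_ofNat, eval_zero, hx] at h'
  linear_combination -h'

lemma Hirota.eval_derivative_derivative_at_zero (h : Hirota a lam f P) (hx : P.eval x = 0) :
    (derivative P).eval x * (derivative (derivative f)).eval x =
      f.eval x * ((derivative (derivative (derivative P))).eval x
        + a * x * (derivative (derivative P)).eval x + (a + lam) * (derivative P).eval x)
      - (derivative f).eval x * (derivative (derivative P)).eval x := by
  have h' := congrArg (fun p => eval x (derivative p)) h
  simp only [derivative_add, derivative_sub, derivative_mul, derivative_X, derivative_C,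
    derivative_ofNat, derivative_zero, eval_add, eval_sub, eval_mul, eval_X, eval_C, eval_ofNat,
    eval_zero, eval_one, hx] at h'
  linear_combination -h'

lemma HasEigenproductDeriv.eval_derivative_derivative_wronskian
    (h : HasEigenproductDeriv a σ P Q) (hx : P.eval x = 0) :
    2 * (derivative P).eval x ^ 2 *
        (derivative (derivative (Polynomial.wronskian P Q))).eval x =
      (Polynomial.wronskian P Q).eval x *
        (4 * (derivative P).eval x * (derivative (derivative (derivative P))).eval x
          - (derivative (derivative P)).eval x ^ 2
          + (2 * σ - a ^ 2 * x ^ 2) * (derivative P).eval x ^ 2) := by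
  obtain ⟨f, g, lam, mu, hfg, hf, hg, rfl⟩ := h
  have hf₁ := hf.eval_derivative_at_zero hx
  have hf₂ := hf.eval_derivative_derivative_at_zero hx
  have hg₁ := hg.eval_derivative_at_zero hx
  have hg₂ := hg.eval_derivative_derivative_at_zero hx
  rw [← hfg]
  simp only [derivative_mul, derivative_add, eval_add, eval_mul]
  set P₁ := (derivative P).eval x
  set P₂ := (derivative (derivative P)).eval x
  linear_combination (2 * P₁ * g.eval x) * hf₂ + (2 * P₁ * f.eval x) * hg₂
    + (2 * P₁ * (derivative g).eval x - P₂ * g.eval x) * hf₁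
    + (a * x * P₁ * f.eval x) * hg₁

end Jets

section Cofactor

variable {R : Type*} [CommRing R] {P h : R[X]} {x y : R}

lemma eval_derivative_of_X_sub_C_mul_eq (hP : (X - C x) * h = P) :
    (derivative P).eval x = h.eval x := by
  simp [← hP]

lemma eval_derivative_derivative_of_X_sub_C_mul_eq (hP : (X - C x) * h = P) :
    (derivative (derivative P)).eval x = 2 * (derivative h).eval x := by
  simp only [← hP, derivative_mul, derivative_add, derivative_sub, derivative_X, derivative_C,
    derivative_one, derivative_zero, eval_add, eval_sub, eval_mul, eval_X, eval_C, eval_one,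
    eval_zero]
  ring

lemma eval_derivative_derivative_derivative_of_X_sub_C_mul_eq (hP : (X - C x) * h = P) :
    (derivative (derivative (derivative P))).eval x = 3 * (derivative (derivative h)).eval x := by
  simp only [← hP, derivative_mul, derivative_add, derivative_sub, derivative_X, derivative_C,
    derivative_one, derivative_zero, eval_add, eval_sub, eval_mul, eval_X, eval_C, eval_one,
    eval_zero]
  ring

lemma wronskian_of_X_sub_C_mul_eq (hP : (X - C x) * h = P) :
    Polynomial.wronskian P h = -h ^ 2 := by
  rw [Polynomial.wronskian, ← hP]
  simp only [derivative_mul, derivative_sub, derivative_X, derivative_C]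
  ring

lemma eval_derivative_of_X_sub_C_mul_eq_of_eval_eq_zero (hP : (X - C x) * h = P)
    (hh : h.eval y = 0) : (derivative P).eval y = (y - x) * (derivative h).eval y := by
  simp [← hP, hh]

lemma eval_derivative_derivative_sq (h : R[X]) (x : R) :
    (derivative (derivative (h ^ 2))).eval x =
      2 * (derivative h).eval x ^ 2 + 2 * h.eval x * (derivative (derivative h)).eval x := by
  simp only [pow_two, derivative_mul, derivative_add, eval_add, eval_mul]
  ring

end Cofactor

/-! ### Residues at simple zeros -/

/-- The symmetric matrix having as eigenvectors the vectors of residues at the zeros `η` of `P` of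
the quotients `Q / P` with `HasEigenproductDeriv a σ P Q`. The first summand has zero diagonal,
since `1 / 0 = 0`. -/
noncomputable def residueMatrix {K ι : Type*} [Field K] [DecidableEq ι] (a : K) (P : K[X])
    (η : ι → K) : Matrix ι ι K :=
  (Matrix.of fun l k => 1 / (η l - η k) ^ 2) - Matrix.diagonal fun l =>
    2 * (derivative (derivative (derivative P))).eval (η l) / (3 * (derivative P).eval (η l))
      - (derivative (derivative P)).eval (η l) ^ 2 / (2 * (derivative P).eval (η l) ^ 2)
      - a ^ 2 * η l ^ 2 / 4

lemma residueMatrix_isSymm {K ι : Type*} [Field K] [DecidableEq ι] (a : K) (P : K[X])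
    (η : ι → K) : (residueMatrix a P η).IsSymm := by
  refine Matrix.IsSymm.sub (Matrix.IsSymm.ext fun l k => ?_) (Matrix.isSymm_diagonal _)
  simp only [Matrix.of_apply]
  rw [← neg_sub, neg_sq]

section Residues

variable {K ι : Type*} [Field K] [Fintype ι] {P Q : K[X]} {η : ι → K}

lemma eval_divByMonic_X_sub_C_eq_zero {x y : K} (hx : P.IsRoot x) (hy : P.IsRoot y) (hne : y ≠ x) :
    (P /ₘ (X - C x)).eval y = 0 := by
  have h : (y - x) * (P /ₘ (X - C x)).eval y = 0 := by
    simpa using (congrArg (eval y) (mul_divByMonic_eq_iff_isRoot.mpr hx)).trans hy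
  exact (mul_eq_zero.mp h).resolve_left (sub_ne_zero.mpr hne)

lemma degree_divByMonic_X_sub_C_lt (hP : P ≠ 0) (x : K) :
    (P /ₘ (X - C x)).degree < P.degree :=
  degree_divByMonic_lt P _ hP (by simp)

/-- At a multiple zero `η l` the cofactor `P / (X - η l)` would vanish at all the `η k`, which are
more than its degree allows. -/
lemma eval_derivative_ne_zero_of_natDegree_eq_card (hP : P ≠ 0)
    (hdeg : P.natDegree = Fintype.card ι) (hη : Function.Injective η)
    (hzero : ∀ k, P.IsRoot (η k)) (l : ι) : (derivative P).eval (η l) ≠ 0 := by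
  intro hl
  have hmul := mul_divByMonic_eq_iff_isRoot.mpr (hzero l)
  rw [eval_derivative_of_X_sub_C_mul_eq hmul] at hl
  have hdeg' : (P /ₘ (X - C (η l))).degree < (Finset.univ : Finset ι).card := by
    rw [Finset.card_univ, ← hdeg, ← degree_eq_natDegree hP]
    exact degree_divByMonic_X_sub_C_lt hP _
  have hcofactor : P /ₘ (X - C (η l)) = 0 := by
    refine eq_zero_of_degree_lt_of_eval_index_eq_zero Finset.univ hη.injOn hdeg' fun k _ => ?_
    rcases eq_or_ne k l with rfl | hkl
    · exact hl
    · exact eval_divByMonic_X_sub_C_eq_zero (hzero l) (hzero k) (hη.ne hkl)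
  rw [hcofactor, mul_zero] at hmul
  exact hP hmul.symm

lemma sum_residue_mul_divByMonic (hdeg : P.natDegree = Fintype.card ι) (hη : Function.Injective η)
    (hzero : ∀ k, P.IsRoot (η k)) (hQ : Q.degree < P.degree) :
    ∑ k, C (Q.eval (η k) / (derivative P).eval (η k)) * (P /ₘ (X - C (η k))) = Q := by
  have hP : P ≠ 0 := ne_zero_of_degree_gt hQ
  have hcard : P.degree = (Finset.univ : Finset ι).card := by
    rw [degree_eq_natDegree hP, hdeg, Finset.card_univ]
  refine eq_of_degrees_lt_of_eval_index_eq Finset.univ hη.injOn ?_ (hcard ▸ hQ) fun l _ => ?_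
  · refine (degree_sum_le _ _).trans_lt ?_
    rw [← hcard, Finset.sup_lt_iff (bot_le.trans_lt hQ)]
    intro k _
    rw [← smul_eq_C_mul]
    exact (degree_smul_le _ _).trans_lt (degree_divByMonic_X_sub_C_lt hP _)
  · rw [eval_finsetSum, Finset.sum_eq_single l]
    · rw [eval_mul, eval_C,
        ← eval_derivative_of_X_sub_C_mul_eq (mul_divByMonic_eq_iff_isRoot.mpr (hzero l)),
        div_mul_cancel₀ _ (eval_derivative_ne_zero_of_natDegree_eq_card hP hdeg hη hzero l)]
    · intro k _ hkl
      rw [eval_mul, eval_divByMonic_X_sub_C_eq_zero (hzero k) (hzero l) (hη.ne hkl.symm), mul_zero]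
    · simp

lemma wronskian_eq_neg_sum_residue_mul_sq (hdeg : P.natDegree = Fintype.card ι)
    (hη : Function.Injective η) (hzero : ∀ k, P.IsRoot (η k)) (hQ : Q.degree < P.degree) :
    Polynomial.wronskian P Q =
      -∑ k, C (Q.eval (η k) / (derivative P).eval (η k)) * (P /ₘ (X - C (η k))) ^ 2 := by
  conv_lhs => rw [← sum_residue_mul_divByMonic hdeg hη hzero hQ, ← wronskianBilin_apply]
  rw [map_sum, ← Finset.sum_neg_distrib]
  refine Finset.sum_congr rfl fun k _ => ?_
  rw [← smul_eq_C_mul, map_smul, wronskianBilin_apply,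
    wronskian_of_X_sub_C_mul_eq (mul_divByMonic_eq_iff_isRoot.mpr (hzero k)), smul_neg,
    smul_eq_C_mul]

lemma eval_derivative_derivative_divByMonic_sq_of_ne {x y : K} (hx : P.IsRoot x) (hy : P.IsRoot y)
    (hne : y ≠ x) : (derivative (derivative ((P /ₘ (X - C x)) ^ 2))).eval y =
      2 * (derivative P).eval y ^ 2 * (1 / (y - x) ^ 2) := by
  have hcofactor := eval_divByMonic_X_sub_C_eq_zero hx hy hne
  rw [eval_derivative_derivative_sq, hcofactor,
    eval_derivative_of_X_sub_C_mul_eq_of_eval_eq_zero (mul_divByMonic_eq_iff_isRoot.mpr hx)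
      hcofactor]
  have : y - x ≠ 0 := sub_ne_zero.mpr hne
  field_simp
  ring

lemma eval_derivative_derivative_divByMonic_sq_self [CharZero K] {x : K} (hx : P.IsRoot x) :
    (derivative (derivative ((P /ₘ (X - C x)) ^ 2))).eval x =
      (derivative (derivative P)).eval x ^ 2 / 2 +
        2 * (derivative P).eval x * (derivative (derivative (derivative P))).eval x / 3 := by
  have hmul := mul_divByMonic_eq_iff_isRoot.mpr hx
  rw [eval_derivative_derivative_sq, eval_derivative_of_X_sub_C_mul_eq hmul,
    eval_derivative_derivative_of_X_sub_C_mul_eq hmul,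
    eval_derivative_derivative_derivative_of_X_sub_C_mul_eq hmul]
  ring

lemma eval_derivative_derivative_wronskian_eq_sum [CharZero K] (hdeg : P.natDegree = Fintype.card ι)
    (hη : Function.Injective η) (hzero : ∀ k, P.IsRoot (η k)) (hQ : Q.degree < P.degree) (l : ι) :
    (derivative (derivative (Polynomial.wronskian P Q))).eval (η l) =
      -(Q.eval (η l) / (derivative P).eval (η l) * ((derivative (derivative P)).eval (η l) ^ 2 / 2 +
        2 * (derivative P).eval (η l) * (derivative (derivative (derivative P))).eval (η l) / 3)
      + 2 * (derivative P).eval (η l) ^ 2 *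
        ∑ k, 1 / (η l - η k) ^ 2 * (Q.eval (η k) / (derivative P).eval (η k))) := by
  classical
  rw [wronskian_eq_neg_sum_residue_mul_sq hdeg hη hzero hQ]
  simp only [derivative_neg, derivative_sum, derivative_C_mul, eval_neg, eval_finsetSum, eval_mul,
    eval_C]
  rw [← Finset.add_sum_erase _ _ (Finset.mem_univ l),
    ← Finset.add_sum_erase _ (fun k => 1 / (η l - η k) ^ 2 * _) (Finset.mem_univ l),
    eval_derivative_derivative_divByMonic_sq_self (hzero l), sub_self, zero_pow two_ne_zero,
    div_zero, zero_mul, zero_add, Finset.mul_sum]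
  congr 2
  refine Finset.sum_congr rfl fun k hk => ?_
  rw [eval_derivative_derivative_divByMonic_sq_of_ne (hzero k) (hzero l)
    (hη.ne (Finset.ne_of_mem_erase hk).symm)]
  ring

theorem HasEigenproductDeriv.residueMatrix_mulVec [CharZero K] [DecidableEq ι] {a σ : K}
    (h : HasEigenproductDeriv a σ P Q) (hdeg : P.natDegree = Fintype.card ι)
    (hη : Function.Injective η) (hzero : ∀ k, P.IsRoot (η k)) (hQ : Q.degree < P.degree) :
    (residueMatrix a P η).mulVec (fun k => Q.eval (η k) / (derivative P).eval (η k)) =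
      (σ / 2) • fun k => Q.eval (η k) / (derivative P).eval (η k) := by
  ext1 l
  have hl := eval_derivative_ne_zero_of_natDegree_eq_card (ne_zero_of_degree_gt hQ) hdeg hη hzero l
  have hW : (Polynomial.wronskian P Q).eval (η l) = -(derivative P).eval (η l) * Q.eval (η l) := by
    rw [Polynomial.wronskian, eval_sub, eval_mul, eval_mul, hzero l]
    ring
  have key := h.eval_derivative_derivative_wronskian (hzero l)
  rw [eval_derivative_derivative_wronskian_eq_sum hdeg hη hzero hQ l, hW] at key
  rw [residueMatrix, Matrix.sub_mulVec, Pi.sub_apply, Matrix.mulVec_diagonal, Pi.smul_apply,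
    smul_eq_mul]
  change ∑ k, 1 / (η l - η k) ^ 2 * (Q.eval (η k) / (derivative P).eval (η k)) - _ = _
  generalize ∑ k, 1 / (η l - η k) ^ 2 * (Q.eval (η k) / (derivative P).eval (η k)) = S at key ⊢
  field_simp at key ⊢
  linear_combination -2 * key

end Residues

lemma dotProduct_eq_zero_of_mulVec_eq_smul {R n : Type*} [CommRing R] [NoZeroDivisors R]
    [Fintype n] {A : Matrix n n R} (hA : A.IsSymm) {u v : n → R} {α β : R} (hne : α ≠ β)
    (hu : A.mulVec u = α • u) (hv : A.mulVec v = β • v) : u ⬝ᵥ v = 0 := by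
  have h : α * (u ⬝ᵥ v) = β * (u ⬝ᵥ v) :=
    calc α * (u ⬝ᵥ v) = A.mulVec u ⬝ᵥ v := by rw [hu, smul_dotProduct, smul_eq_mul]
      _ = u ⬝ᵥ A.mulVec v := by
        rw [Matrix.dotProduct_mulVec, ← Matrix.mulVec_transpose, hA.eq]
      _ = β * (u ⬝ᵥ v) := by rw [hv, dotProduct_smul, smul_eq_mul]
  rw [← sub_eq_zero, ← sub_mul] at h
  exact (mul_eq_zero.mp h).resolve_left (sub_ne_zero.mpr hne)

theorem HasEigenproductDeriv.sum_residue_mul_residue_eq_zero {K ι : Type*} [Field K] [CharZero K]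
    [Fintype ι] {a σ₁ σ₂ : K} {P Q₁ Q₂ : K[X]} (h₁ : HasEigenproductDeriv a σ₁ P Q₁)
    (h₂ : HasEigenproductDeriv a σ₂ P Q₂) (hne : σ₁ ≠ σ₂) (hQ₁ : Q₁.degree < P.degree)
    (hQ₂ : Q₂.degree < P.degree) {η : ι → K} (hdeg : P.natDegree = Fintype.card ι)
    (hη : Function.Injective η) (hzero : ∀ k, P.IsRoot (η k)) :
    ∑ k, Q₁.eval (η k) / (derivative P).eval (η k) *
      (Q₂.eval (η k) / (derivative P).eval (η k)) = 0 := by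
  classical
  exact dotProduct_eq_zero_of_mulVec_eq_smul (residueMatrix_isSymm a P η)
    (fun h => hne ((div_left_inj' two_ne_zero).mp h))
    (h₁.residueMatrix_mulVec hdeg hη hzero hQ₁) (h₂.residueMatrix_mulVec hdeg hη hzero hQ₂)

/-! ### Hermite polynomials -/

lemma derivative_hermiteP_succ (n : ℕ) :
    derivative (hermiteP (n + 1)) = C (2 * ((n : ℝ) + 1)) * hermiteP n := by
  induction n with
  | zero =>
    simp only [hermiteP, derivative_sub, derivative_mul, derivative_X, derivative_ofNat,
      derivative_one, Nat.cast_zero, zero_add, mul_one, map_ofNat, derivative_zero]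
    ring
  | succ n ih =>
    rw [hermiteP, derivative_sub, derivative_mul, ih, derivative_C_mul]
    simp only [hermiteP, Nat.cast_add, Nat.cast_one, C_mul, C_add, C_1, derivative_mul,
      derivative_X, derivative_ofNat, map_ofNat]
    ring

lemma derivative_derivative_hermiteP (n : ℕ) :
    derivative (derivative (hermiteP n)) =
      2 * X * derivative (hermiteP n) - C (2 * (n : ℝ)) * hermiteP n := by
  have h := derivative_hermiteP_succ n
  rw [hermiteP, derivative_sub, derivative_mul, derivative_mul, derivative_X,
    derivative_ofNat] at h
  simp only [C_mul, C_add, C_1, map_ofNat] at h ⊢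
  linear_combination -h

lemma hirota_hermiteP_one (n : ℕ) : Hirota 2 (2 * (n : ℝ)) (hermiteP n) 1 := by
  simp only [Hirota, derivative_derivative_hermiteP n, derivative_one, derivative_zero, map_ofNat]
  ring

lemma degree_hermiteP (n : ℕ) : (hermiteP n).degree = n := by
  induction n with
  | zero => simp [hermiteP]
  | succ n ih =>
    have hmul : (2 * X * hermiteP n : ℝ[X]).degree = ((n + 1 : ℕ) : WithBot ℕ) := by
      rw [degree_mul, degree_mul, degree_X, ih, show (2 : ℝ[X]) = C 2 from (map_ofNat C 2).symm,
        degree_C two_ne_zero, zero_add, add_comm, Nat.cast_add_one]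
    rw [hermiteP, degree_sub_eq_left_of_degree_lt, hmul]
    rw [hmul]
    refine degree_derivative_le.trans_lt ?_
    rw [ih]
    exact_mod_cast n.lt_succ_self

lemma natDegree_hermiteP (n : ℕ) : (hermiteP n).natDegree = n :=
  natDegree_eq_of_degree_eq_some (degree_hermiteP n)

lemma hermiteP_ne_zero (n : ℕ) : hermiteP n ≠ 0 := by
  simp [← degree_ne_bot, degree_hermiteP]

lemma natDegree_XiHermite_add_choose {m : ℕ} {e : Fin m → ℕ} (he : Function.Injective e) :
    XiHermite e ≠ 0 ∧ (XiHermite e).natDegree + m.choose 2 = ∑ k, e k := by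
  simpa only [XiHermite, natDegree_hermiteP] using
    natDegree_wronskian_add_choose (fun k => hermiteP (e k)) (fun k => hermiteP_ne_zero (e k))
      (by simpa only [natDegree_hermiteP] using he)

lemma XiHermite_eq_zero_of_not_injective {m : ℕ} {e : Fin m → ℕ} (he : ¬Function.Injective e) :
    XiHermite e = 0 := by
  obtain ⟨i, j, heq, hne⟩ := Function.not_injective_iff.mp he
  exact Matrix.det_zero_of_column_eq hne fun k => by simp [heq]

lemma degree_XiHermite_update_lt {m : ℕ} {e : Fin m → ℕ} (he : Function.Injective e) {i : Fin m}
    {t : ℕ} (ht : t < e i) : (XiHermite (Function.update e i t)).degree < (XiHermite e).degree := by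
  obtain ⟨hW, hdeg⟩ := natDegree_XiHermite_add_choose he
  by_cases hinj : Function.Injective (Function.update e i t)
  · obtain ⟨hW', hdeg'⟩ := natDegree_XiHermite_add_choose hinj
    have hsum : ∑ k, Function.update e i t k < ∑ k, e k :=
      Finset.sum_lt_sum (fun k _ => update_le_self_iff.mpr ht.le k)
        ⟨i, Finset.mem_univ i, by simpa using ht⟩
    rw [degree_eq_natDegree hW, degree_eq_natDegree hW', Nat.cast_lt]
    omega
  · rw [XiHermite_eq_zero_of_not_injective hinj, degree_zero, bot_lt_iff_ne_bot]
    exact degree_ne_bot.mpr hW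

lemma hasEigenproductDeriv_XiHermite_update {K : ℕ} {e : Fin (K + 1) → ℕ}
    (he : Function.Injective e) (i : Fin (K + 1)) (t : ℕ) :
    HasEigenproductDeriv (2 : ℝ) (2 * e i + 2 * t - (2 * K + 1) * 2) (XiHermite e)
      (XiHermite (Function.update e i t)) := by
  have hcomp : (fun k => hermiteP (Function.update e i t k)) =
      Function.update (fun k => hermiteP (e k)) i (hermiteP t) :=
    Function.comp_update hermiteP e i t
  rw [XiHermite, XiHermite, hcomp]
  exact hasEigenproductDeriv_wronskian_update (fun k => hermiteP_ne_zero (e k))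
    (by simpa only [natDegree_hermiteP] using he) (fun k => hirota_hermiteP_one (e k)) i
    (hirota_hermiteP_one t)

theorem discrete_orthogonality_KA_hermite_extra_general {K n : ℕ} {e : Fin (K + 1) → ℕ}
    (he : Function.Injective e) (hdeg : (XiHermite e).natDegree = n) {η : Fin n → ℂ}
    (hη : Function.Injective η) (hzero : ∀ l, aeval (η l) (XiHermite e) = 0)
    (i i' : Fin (K + 1)) {t t' : ℕ} (ht : t < e i) (ht' : t' < e i') (hne : e i + t ≠ e i' + t') :
    ∑ l, aeval (η l) (XiHermite (Function.update e i t)) *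
      aeval (η l) (XiHermite (Function.update e i' t')) /
        aeval (η l) (derivative (XiHermite e)) ^ 2 = 0 := by
  have hσ : algebraMap ℝ ℂ (2 * e i + 2 * t - (2 * K + 1) * 2) ≠
      algebraMap ℝ ℂ (2 * e i' + 2 * t' - (2 * K + 1) * 2) := by
    refine (algebraMap ℝ ℂ).injective.ne fun h => hne ?_
    have : (e i + t : ℝ) = e i' + t' := by linarith
    exact_mod_cast this
  have hsum := ((hasEigenproductDeriv_XiHermite_update he i t).map
    (algebraMap ℝ ℂ)).sum_residue_mul_residue_eq_zero
      ((hasEigenproductDeriv_XiHermite_update he i' t').map (algebraMap ℝ ℂ)) hσ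
      (by simpa only [degree_map] using degree_XiHermite_update_lt he ht)
      (by simpa only [degree_map] using degree_XiHermite_update_lt he ht')
      (by rw [natDegree_map, hdeg, Fintype.card_fin]) hη
      (fun l => by rw [IsRoot.def, eval_map_algebraMap, hzero])
  simpa only [derivative_map, eval_map_algebraMap, div_mul_div_comm, ← pow_two] using hsum

lemma XiHermite_snoc {M : ℕ} (d : Fin M → ℕ) (n : ℕ) :
    XiHermite (Fin.snoc d n : Fin (M + 1) → ℕ) = KAHermite d n :=
  congrArg _root_.wronskian (Fin.comp_snoc hermiteP d n)

/-- **Discrete orthogonality relations involving the extra lower degree Krein–Adler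
Hermite polynomials** `P_{D′(j,ε),N}`, obtained by replacing the entry `d j` of the
multi-index `D` by a smaller unused index `ε`.  Part (a): orthogonality of an ordinary
lower degree polynomial `P_{D,m}` and an extra one; part (b): orthogonality of two extra
ones.  The side conditions `m + N ≠ d j + ε` resp. `d j + ε ≠ d j' + ε'` express the
distinctness of the corresponding eigenvalues. -/
theorem discrete_orthogonality_KA_hermite_extra
    (M N : ℕ) (d : Fin M → ℕ) (hpos : ∀ k, 0 < d k) (hmono : StrictMono d)
    (hN : ∀ k, N ≠ d k)
    (Nt : ℕ) (hNt : Nt + M * (M + 1) / 2 = (∑ k, d k) + N)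
    (hdeg : (KAHermite d N).natDegree = Nt)
    (η : Fin Nt → ℂ) (hη : Function.Injective η)
    (hzero : ∀ l, Polynomial.aeval (η l) (KAHermite d N) = 0)
    (hXi : ∀ l, Polynomial.aeval (η l) (XiHermite d) ≠ 0)
    (j : Fin M) (ε : ℕ) (hε : ε < d j) (hεD : ∀ k, ε ≠ d k)
    (j' : Fin M) (ε' : ℕ) (hε' : ε' < d j') (hε'D : ∀ k, ε' ≠ d k) :
    (∀ m : ℕ, m < N → (∀ k, m ≠ d k) → m + N ≠ d j + ε →
      ∑ l, Polynomial.aeval (η l) (KAHermite d m) *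
          Polynomial.aeval (η l) (KAHermite (Function.update d j ε) N) /
          (Polynomial.aeval (η l) (Polynomial.derivative (KAHermite d N))) ^ 2 = 0) ∧
    (d j + ε ≠ d j' + ε' →
      ∑ l, Polynomial.aeval (η l) (KAHermite (Function.update d j ε) N) *
          Polynomial.aeval (η l) (KAHermite (Function.update d j' ε') N) /
          (Polynomial.aeval (η l) (Polynomial.derivative (KAHermite d N))) ^ 2 = 0) := by
  have he : Function.Injective (Fin.snoc d N : Fin (M + 1) → ℕ) :=
    Fin.snoc_injective_iff.mpr ⟨hmono.injective, fun ⟨k, hk⟩ => hN k hk.symm⟩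
  have orth := discrete_orthogonality_KA_hermite_extra_general he (by rwa [XiHermite_snoc]) hη
    (by simpa only [XiHermite_snoc] using hzero)
  refine ⟨fun m hm _ hne => ?_, fun hne => ?_⟩
  · simpa only [Fin.update_snoc_last, ← Fin.snoc_update, XiHermite_snoc] using
      orth (t := m) (t' := ε) (Fin.last M) j.castSucc (by simpa using hm) (by simpa using hε)
        (by simpa [add_comm] using hne)
  · simpa only [← Fin.snoc_update, XiHermite_snoc] using
      orth (t := ε) (t' := ε') j.castSucc j'.castSucc (by simpa using hε) (by simpa using hε')
        (by simpa using hne)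
end

section
/- Let H_n be the physicists' Hermite polynomials, D = {d_1 < … < d_M} a finite set of positive integers, and N ∈ ℕ with N ∉ D. Set Ξ_D = W[H_{d_1},…,H_{d_M}] and P_{D,N} = W[H_{d_1},…,H_{d_M},H_N]. Fix j ∈ {1,…,M} and ε ∈ {0,…,d_j−1} \ D, and let Ξ_{D′} = W[H_{d_1},…,H_{d_{j−1}},H_ε,H_{d_{j+1}},…,H_{d_M}] and P = P_{D′,N} = W[H_{d_1},…,H_{d_{j−1}},H_ε,H_{d_{j+1}},…,H_{d_M},H_N]. Set Ẽ = 2(d_j + ε − N) and E′ = 4(N − ε). Then the following identity holds in ℝ[X]: Ξ_D·(−P″ + 2·X·P′) + 2·(Ξ_D)′·P′ − (Ξ_D)″·P − 2·X·(Ξ_D)′·P + (2M − Ẽ)·Ξ_D·P = E′·P_{D,N}·Ξ_{D′}, where ′ and ″ denote first and second polynomial derivatives. -/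
/-!
The identity is covariant under Darboux transformations, which reduces it to `M = 1`.

In a differential field consider, for a common potential `U`, solutions of
`y″ = 2X·y′ + (U − λ)·y`; for `U = 0` and `λ = 2n` the polynomial `H_n` is one. If `f ≠ 0` is a
solution, then `g ↦ g′ − (f′/f)·g = f·(g/f)′` maps solutions to solutions with the same `λ` for the
potential `U + 2 − 2(f′/f)′`, and `W[f, g_1, …, g_k] = f · W[g̃_1, …, g̃_k]`. All four Wronskians of
the identity thus lose the same factor `f`, and what `f` contributes to the second derivatives is
exactly compensated by the change of potential. After all common columns have been removed in this
way, a direct computation with `W[a]`, `W[e,n]`, `W[a,n]` and `W[e]` remains. If `f = 0`, all four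
Wronskians vanish.
-/

open Polynomial

section Wronskian

variable {k R : Type*} [CommRing k] [CommRing R] [Algebra k R] (D : Derivation k R R)

/-- The Wronskian of a family of elements of a commutative ring with respect to a derivation `D`;
`wronskian` is the case of `ℝ[X]` with its usual derivative. -/
noncomputable def diffWronskian {m : ℕ} (f : Fin m → R) : R :=
  (Matrix.of fun i j : Fin m => D^[(i : ℕ)] (f j)).det

lemma iterate_derivation_mul (n : ℕ) (a b : R) :
    D^[n] (a * b) =
      ∑ ij ∈ Finset.HasAntidiagonal.antidiagonal n,
        (n.choose ij.1 : R) * (D^[ij.1] a * D^[ij.2] b) := by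
  induction n with
  | zero => simp
  | succ n ih =>
    rw [Finset.sum_antidiagonal_choose_succ_mul fun i j => D^[i] a * D^[j] b]
    simp only [Function.iterate_succ_apply', ih, map_sum, Derivation.leibniz,
      Derivation.map_natCast, smul_eq_mul, mul_zero, add_zero, mul_add, Finset.sum_add_distrib]
    congr 1
    refine Finset.sum_congr rfl fun ⟨i, j⟩ hij => ?_
    rw [n.choose_symm_of_eq_add (Finset.HasAntidiagonal.mem_antidiagonal.1 hij).symm,
      mul_comm (D^[j] b)]

lemma diffWronskian_mul_left {m : ℕ} (h : R) (g : Fin m → R) :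
    diffWronskian D (fun j => h * g j) = h ^ m * diffWronskian D g := by
  -- The Leibniz rule is multiplication by a lower triangular matrix with diagonal `h`.
  let T : Matrix (Fin m) (Fin m) R := Matrix.of fun i l =>
    ((i : ℕ).choose l : R) * D^[i - l] h
  have hT : T.det = h ^ m := by
    rw [Matrix.det_of_isLowerTriangular T fun i l hil => ?_]
    · simp [T]
    · simp [T, Nat.choose_eq_zero_of_lt (show (i : ℕ) < l from hil)]
  have hrow : (Matrix.of fun i j : Fin m => D^[(i : ℕ)] (h * g j)) =
      T * Matrix.of fun i j : Fin m => D^[(i : ℕ)] (g j) := by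
    ext i j
    rw [Matrix.mul_apply, Matrix.of_apply, mul_comm h, iterate_derivation_mul,
      Finset.Nat.sum_antidiagonal_eq_sum_range_succ
        fun l r => ((i : ℕ).choose l : R) * (D^[l] (g j) * D^[r] h)]
    simp only [T, Matrix.of_apply]
    rw [Fin.sum_univ_eq_sum_range
      fun l => ((i : ℕ).choose l : R) * D^[(i : ℕ) - l] h * D^[l] (g j)]
    refine Finset.sum_subset_zero_on_sdiff (Finset.range_subset_range.2 i.2)
      (fun l hl => ?_) fun l _ => by ring
    have hil : (i : ℕ) < l := by simpa using (Finset.mem_sdiff.1 hl).2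
    simp [Nat.choose_eq_zero_of_lt hil]
  rw [diffWronskian, hrow, Matrix.det_mul, hT, diffWronskian]

lemma diffWronskian_cons_one {m : ℕ} (g : Fin m → R) :
    diffWronskian D (Fin.cons 1 g : Fin (m + 1) → R) = diffWronskian D (fun j => D (g j)) := by
  rw [diffWronskian, Matrix.det_succ_column_zero, Fin.sum_univ_succ, Finset.sum_eq_zero]
  · simp [diffWronskian, Matrix.submatrix]
  · simp

lemma diffWronskian_comp_perm {m : ℕ} (σ : Equiv.Perm (Fin m)) (f : Fin m → R) :
    diffWronskian D (f ∘ σ) = (Equiv.Perm.sign σ : ℤ) * diffWronskian D f :=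
  Matrix.det_permute' σ (Matrix.of fun i j : Fin m => D^[(i : ℕ)] (f j))

lemma diffWronskian_snoc_comp_perm {m : ℕ} (σ : Equiv.Perm (Fin m)) (f : Fin m → R) (y : R) :
    diffWronskian D (Fin.snoc (f ∘ σ) y : Fin (m + 1) → R) =
      (Equiv.Perm.sign σ : ℤ) * diffWronskian D (Fin.snoc f y : Fin (m + 1) → R) := by
  have hext : (Fin.snoc (f ∘ σ) y : Fin (m + 1) → R) =
      (Fin.snoc f y : Fin (m + 1) → R) ∘ σ.viaFintypeEmbedding Fin.castSuccEmb := by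
    funext k
    refine Fin.lastCases ?_ (fun i => ?_) k
    · have hlast : Fin.last m ∉ Set.range (Fin.castSuccEmb (n := m)) := by simp
      simp [Equiv.Perm.viaFintypeEmbedding_apply_notMem_range _ _ hlast]
    · have hcast := σ.viaFintypeEmbedding_apply_image Fin.castSuccEmb i
      simp only [Fin.coe_castSuccEmb] at hcast
      simp [hcast]
  rw [hext, diffWronskian_comp_perm, Equiv.Perm.viaFintypeEmbedding_sign]

variable {D}

lemma map_diffWronskian {S : Type*} [CommRing S] [Algebra k S] {D' : Derivation k S S} (φ : R →+* S)
    (hφ : ∀ a, D' (φ a) = φ (D a)) {m : ℕ} (f : Fin m → R) :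
    φ (diffWronskian D f) = diffWronskian D' (φ ∘ f) := by
  have hiter (i : ℕ) (a : R) : φ (D^[i] a) = D'^[i] (φ a) :=
    (show Function.Semiconj φ D D' from fun a => (hφ a).symm).iterate_right i a
  rw [diffWronskian, RingHom.map_det, diffWronskian]
  congr 1
  ext i j
  simp [hiter]

end Wronskian

section HirotaForm

variable {k R : Type*} [CommRing k] [CommRing R] [Algebra k R] (D : Derivation k R R) (x c : R)

/-- The bilinear form `(A, B) ↦ A · (H̃ B + c·B)`, where `H̃` is the Hermite operator `−D² + 2x·D`
deformed by the denominator `A`, with all denominators cleared. -/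
def hirotaForm (A B : R) : R :=
  A * (-D (D B) + 2 * x * D B) + 2 * D A * D B - D (D A) * B - 2 * x * D A * B + c * A * B

lemma hirotaForm_mul_mul {f v : R} (hv : D f = v * f) (A B : R) :
    hirotaForm D x c (f * A) (f * B) = f ^ 2 * hirotaForm D x (c - 2 * D v) A B := by
  simp only [hirotaForm, map_add, Derivation.leibniz, smul_eq_mul, hv]
  ring

lemma hirotaForm_units_mul (s : ℤˣ) (A B : R) :
    hirotaForm D x c ((s : ℤ) * A) ((s : ℤ) * B) = hirotaForm D x c A B := by
  rcases Int.units_eq_one_or s with rfl | rfl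
  · simp [hirotaForm]
  · simp only [hirotaForm, Units.val_neg, Units.val_one, Int.cast_neg, Int.cast_one, neg_one_mul,
      map_neg]
    ring

variable {D}

lemma map_hirotaForm {S : Type*} [CommRing S] [Algebra k S] {D' : Derivation k S S} (φ : R →+* S)
    (hφ : ∀ a, D' (φ a) = φ (D a)) (A B : R) :
    φ (hirotaForm D x c A B) = hirotaForm D' (φ x) (φ c) (φ A) (φ B) := by
  simp only [hirotaForm, map_add, map_sub, map_mul, map_neg, map_ofNat, hφ]

end HirotaForm

/-- `g` solves the Hermite equation `g″ = 2x·g′ + (U − l)·g` with potential `U` and a constant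
spectral parameter `l`. Hermite polynomials are the case `U = 0`; Darboux transformations change
`U`. -/
structure IsHermiteSolution {k R : Type*} [CommRing k] [CommRing R] [Algebra k R]
    (D : Derivation k R R) (x U l g : R) : Prop where
  const : D l = 0
  ode : D (D g) = 2 * x * D g + (U - l) * g

lemma IsHermiteSolution.map {k R S : Type*} [CommRing k] [CommRing R] [CommRing S] [Algebra k R]
    [Algebra k S] {D : Derivation k R R} {D' : Derivation k S S} (φ : R →+* S)
    (hφ : ∀ a, D' (φ a) = φ (D a)) {x U l g : R} (hg : IsHermiteSolution D x U l g) :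
    IsHermiteSolution D' (φ x) (φ U) (φ l) (φ g) where
  const := by rw [hφ, hg.const, map_zero]
  ode := by simp only [hφ, hg.ode, map_add, map_sub, map_mul, map_ofNat]

section Darboux

variable {k K : Type*} [CommRing k] [Field K] [Algebra k K] (D : Derivation k K K)

/-- The Darboux transform `g ↦ g′ − (f′/f)·g` with seed `f`. For `f = 0` it is `g ↦ g′`. -/
def darboux (f g : K) : K := D g - D f / f * g

lemma darboux_eq_mul_derivation_div {f : K} (hf : f ≠ 0) (g : K) :
    darboux D f g = f * D (g / f) := by
  have hg : D g = f * D (g / f) + g / f * D f := by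
    conv_lhs => rw [← mul_div_cancel₀ g hf]
    rw [Derivation.leibniz, smul_eq_mul, smul_eq_mul]
  rw [darboux, hg]
  ring

lemma diffWronskian_cons {m : ℕ} (f : K) (g : Fin m → K) :
    diffWronskian D (Fin.cons f g : Fin (m + 1) → K) =
      f * diffWronskian D (darboux D f ∘ g) := by
  rcases eq_or_ne f 0 with rfl | hf
  · rw [zero_mul, diffWronskian]
    exact Matrix.det_eq_zero_of_column_eq_zero 0 fun i => by simp
  · have hcons : (Fin.cons f g : Fin (m + 1) → K) =
        fun j => f * (Fin.cons 1 (fun i => g i / f) : Fin (m + 1) → K) j := by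
      funext j
      refine Fin.cases ?_ (fun i => ?_) j
      · simp
      · simp [mul_div_cancel₀ _ hf]
    have hdarboux : darboux D f ∘ g = fun i => f * D (g i / f) :=
      funext fun i => darboux_eq_mul_derivation_div D hf (g i)
    rw [hcons, diffWronskian_mul_left, diffWronskian_cons_one, hdarboux, diffWronskian_mul_left,
      pow_succ']
    ring

lemma diffWronskian_snoc_cons {m : ℕ} (f : K) (g : Fin m → K) (y : K) :
    diffWronskian D (Fin.snoc (Fin.cons f g : Fin (m + 1) → K) y : Fin (m + 2) → K) =
      f * diffWronskian D (Fin.snoc (darboux D f ∘ g) (darboux D f y) : Fin (m + 1) → K) := by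
  rw [← Fin.cons_snoc_eq_snoc_cons, diffWronskian_cons, Fin.comp_snoc]

lemma diffWronskian_snoc_snoc_cons {m : ℕ} (f : K) (g : Fin m → K) (y z : K) :
    diffWronskian D (Fin.snoc (Fin.snoc (Fin.cons f g : Fin (m + 1) → K) y : Fin (m + 2) → K) z :
        Fin (m + 3) → K) =
      f * diffWronskian D (Fin.snoc (Fin.snoc (darboux D f ∘ g) (darboux D f y) :
        Fin (m + 1) → K) (darboux D f z) : Fin (m + 2) → K) := by
  rw [← Fin.cons_snoc_eq_snoc_cons, diffWronskian_snoc_cons, Fin.comp_snoc]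

variable {D} {x U : K}

lemma IsHermiteSolution.riccati {f l : K} (hf : f ≠ 0) (h : IsHermiteSolution D x U l f) :
    D (D f / f) = 2 * x * (D f / f) + (U - l) - (D f / f) ^ 2 := by
  rw [Derivation.leibniz_div, h.ode]
  simp only [smul_eq_mul]
  field_simp

lemma IsHermiteSolution.darboux (hx : D x = 1) {f l g p : K} (hf : f ≠ 0)
    (hfl : IsHermiteSolution D x U l f) (hgp : IsHermiteSolution D x U p g) :
    IsHermiteSolution D x (U + 2 - 2 * D (D f / f)) p (darboux D f g) where
  const := hgp.const
  ode := by
    have h2 : D (2 : K) = 0 := by simpa using D.map_natCast 2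
    have hv := hfl.riccati hf
    have hDv := congrArg D hv
    have hDg := congrArg D hgp.ode
    unfold _root_.darboux
    generalize D f / f = v at *
    simp only [pow_two, map_add, map_sub, Derivation.leibniz, smul_eq_mul, hx, hfl.const,
      hgp.const, h2] at hDv hDg ⊢
    linear_combination hDg - g * hDv - v * hgp.ode

lemma hirotaForm_wronskian_pair (hx : D x = 1) {a e n la le ln : K}
    (ha : IsHermiteSolution D x U la a) (he : IsHermiteSolution D x U le e)
    (hn : IsHermiteSolution D x U ln n) :
    hirotaForm D x (2 + U - (la + le - ln)) a (e * D n - n * D e) =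
      2 * (ln - le) * (a * D n - n * D a) * e := by
  have h2 : D (2 : K) = 0 := by simpa using D.map_natCast 2
  have hW : D (e * D n - n * D e) = 2 * x * (e * D n - n * D e) + (le - ln) * e * n := by
    simp only [map_sub, Derivation.leibniz, smul_eq_mul, he.ode, hn.ode]
    ring
  have hDW : D (D (e * D n - n * D e)) = 2 * (e * D n - n * D e) +
      2 * x * D (e * D n - n * D e) + (le - ln) * (e * D n + n * D e) := by
    rw [hW]
    simp only [map_add, map_sub, Derivation.leibniz, smul_eq_mul, hx, h2, he.const, hn.const,
      he.ode, hn.ode]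
    ring
  rw [hirotaForm, hDW, hW, ha.ode]
  ring

theorem hirotaForm_diffWronskian_snoc_of_field (hx : D x = 1) {m : ℕ} {F l : Fin m → K}
    {a e n la le ln : K} (hF : ∀ k, IsHermiteSolution D x U (l k) (F k))
    (ha : IsHermiteSolution D x U la a) (he : IsHermiteSolution D x U le e)
    (hn : IsHermiteSolution D x U ln n) :
    hirotaForm D x (2 * (m + 1) + U - (la + le - ln))
        (diffWronskian D (Fin.snoc F a : Fin (m + 1) → K))
        (diffWronskian D (Fin.snoc (Fin.snoc F e : Fin (m + 1) → K) n : Fin (m + 2) → K)) =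
      2 * (ln - le) *
        diffWronskian D (Fin.snoc (Fin.snoc F a : Fin (m + 1) → K) n : Fin (m + 2) → K) *
        diffWronskian D (Fin.snoc F e : Fin (m + 1) → K) := by
  induction m generalizing U a e n with
  | zero =>
    simpa [diffWronskian, Matrix.det_fin_two, Fin.snoc] using hirotaForm_wronskian_pair hx ha he hn
  | succ m ih =>
    induction F using Fin.consCases with | _ f G
    simp only [diffWronskian_snoc_cons, diffWronskian_snoc_snoc_cons]
    rcases eq_or_ne f 0 with rfl | hf
    · simp [hirotaForm]
    have hfl : IsHermiteSolution D x U (l 0) f := by simpa using hF 0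
    have hG (k : Fin m) := hfl.darboux hx hf (by simpa using hF k.succ)
    have key := ih (F := _root_.darboux D f ∘ G) hG (hfl.darboux hx hf ha)
      (hfl.darboux hx hf he) (hfl.darboux hx hf hn)
    have hpotential : 2 * ((m + 1 : ℕ) + 1) + U - (la + le - ln) - 2 * D (D f / f) =
        2 * (m + 1) + (U + 2 - 2 * D (D f / f)) - (la + le - ln) := by
      push_cast
      ring
    rw [hirotaForm_mul_mul D x _ (div_mul_cancel₀ (D f) hf).symm, hpotential]
    linear_combination f ^ 2 * key

end Darboux

-- `Ω` commutes with formally étale base change: `Ω[T⁄k] = T ⊗[S] Ω[S⁄k]`.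
lemma exists_derivation_extension_of_formallyEtale {k S T : Type*} [CommRing k] [CommRing S]
    [CommRing T] [Algebra k S] [Algebra k T] [Algebra S T] [IsScalarTower k S T]
    [Algebra.FormallyEtale S T] (D : Derivation k S S) :
    ∃ D' : Derivation k T T, ∀ s, D' (algebraMap S T s) = algebraMap S T (D s) := by
  let δ : Derivation k S T := (Algebra.linearMap S T).compDer D
  have hΩ := KaehlerDifferential.isBaseChange_of_formallyEtale k S T
  refine ⟨(hΩ.lift δ.liftKaehlerDifferential).compDer (KaehlerDifferential.D k T), fun s => ?_⟩
  have hlift := hΩ.lift_eq δ.liftKaehlerDifferential (KaehlerDifferential.D k S s)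
  rwa [KaehlerDifferential.map_D, Derivation.liftKaehlerDifferential_comp_D] at hlift

section Domain

variable {k R : Type*} [CommRing k] [CommRing R] [IsDomain R] [Algebra k R]
  {D : Derivation k R R} {x U : R}

theorem hirotaForm_diffWronskian_snoc (hx : D x = 1) {m : ℕ} {F l : Fin m → R}
    {a e n la le ln : R} (hF : ∀ k, IsHermiteSolution D x U (l k) (F k))
    (ha : IsHermiteSolution D x U la a) (he : IsHermiteSolution D x U le e)
    (hn : IsHermiteSolution D x U ln n) :
    hirotaForm D x (2 * (m + 1) + U - (la + le - ln))
        (diffWronskian D (Fin.snoc F a : Fin (m + 1) → R))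
        (diffWronskian D (Fin.snoc (Fin.snoc F e : Fin (m + 1) → R) n : Fin (m + 2) → R)) =
      2 * (ln - le) *
        diffWronskian D (Fin.snoc (Fin.snoc F a : Fin (m + 1) → R) n : Fin (m + 2) → R) *
        diffWronskian D (Fin.snoc F e : Fin (m + 1) → R) := by
  let φ := algebraMap R (FractionRing R)
  have := Algebra.FormallyEtale.of_isLocalization (Rₘ := FractionRing R) (nonZeroDivisors R)
  obtain ⟨D', hφ⟩ := exists_derivation_extension_of_formallyEtale (T := FractionRing R) D
  have key := hirotaForm_diffWronskian_snoc_of_field (F := φ ∘ F) (l := φ ∘ l)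
    (by rw [hφ, hx, map_one]) (fun k => (hF k).map φ hφ) (ha.map φ hφ) (he.map φ hφ) (hn.map φ hφ)
  apply IsFractionRing.injective R (FractionRing R)
  change φ _ = φ _
  simpa only [map_hirotaForm _ _ φ hφ, map_diffWronskian φ hφ, Fin.comp_snoc, map_sub, map_add,
    map_mul, map_ofNat, map_natCast, map_one] using key

theorem hirotaForm_diffWronskian_update (hx : D x = 1) {M : ℕ} {F l : Fin M → R} {e n le ln : R}
    (j : Fin M) (hF : ∀ k, IsHermiteSolution D x U (l k) (F k))
    (he : IsHermiteSolution D x U le e) (hn : IsHermiteSolution D x U ln n) :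
    hirotaForm D x (2 * M + U - (l j + le - ln)) (diffWronskian D F)
        (diffWronskian D (Fin.snoc (Function.update F j e) n : Fin (M + 1) → R)) =
      2 * (ln - le) * diffWronskian D (Fin.snoc F n : Fin (M + 1) → R) *
        diffWronskian D (Function.update F j e) := by
  obtain ⟨m, rfl⟩ := Nat.exists_eq_add_one.2 j.pos
  let σ : Equiv.Perm (Fin (m + 1)) := Equiv.swap j (Fin.last m)
  let G : Fin m → R := Fin.init (F ∘ σ)
  have hFσ : F ∘ σ = (Fin.snoc G (F j) : Fin (m + 1) → R) := by
    rw [← Fin.snoc_init_self (F ∘ σ)]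
    simp [σ, G]
  have hFσ' : Function.update F j e ∘ σ = (Fin.snoc G e : Fin (m + 1) → R) := by
    rw [Function.update_comp_equiv, hFσ, Equiv.symm_swap, Equiv.swap_apply_left,
      Fin.update_snoc_last]
  have key := hirotaForm_diffWronskian_snoc hx (F := G) (fun k => hF (σ k.castSucc)) (hF j) he hn
  rw [← hFσ, ← hFσ'] at key
  simp only [diffWronskian_comp_perm, diffWronskian_snoc_comp_perm, hirotaForm_units_mul] at key
  have hsign : ((Equiv.Perm.sign σ : ℤ) : R) ^ 2 = 1 := by
    rcases Int.units_eq_one_or (Equiv.Perm.sign σ) with h | h <;> simp [h]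
  push_cast
  rw [key]
  linear_combination (2 * (ln - le) * diffWronskian D (Fin.snoc F n : Fin (m + 2) → R) *
    diffWronskian D (Function.update F j e)) * hsign

end Domain

lemma hermiteP_ode (n : ℕ) : derivative (derivative (hermiteP n)) =
    2 * X * derivative (hermiteP n) - 2 * (n : ℝ[X]) * hermiteP n := by
  induction n with
  | zero => simp [hermiteP]
  | succ n ih =>
    have hlower : derivative (hermiteP (n + 1)) = (2 * (n : ℝ[X]) + 2) * hermiteP n := by
      simp only [hermiteP, derivative_sub, derivative_mul, derivative_X, ih, derivative_ofNat]
      ring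
    have hlower' : derivative (derivative (hermiteP (n + 1))) =
        (2 * (n : ℝ[X]) + 2) * derivative (hermiteP n) := by
      simp [hlower]
    rw [hlower', hlower, hermiteP]
    push_cast
    ring

lemma isHermiteSolution_hermiteP (n : ℕ) :
    IsHermiteSolution (derivative' (R := ℝ)) X 0 (2 * (n : ℝ[X])) (hermiteP n) where
  const := by simp [derivative'_apply]
  ode := by simpa [derivative'_apply, sub_eq_add_neg] using hermiteP_ode n

lemma XiHermite_eq_diffWronskian {M : ℕ} (d : Fin M → ℕ) :
    XiHermite d = diffWronskian derivative' (hermiteP ∘ d) := rfl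

lemma KAHermite_eq_diffWronskian {M : ℕ} (d : Fin M → ℕ) (n : ℕ) :
    KAHermite d n = diffWronskian derivative' (Fin.snoc (hermiteP ∘ d) (hermiteP n) :
      Fin (M + 1) → ℝ[X]) := rfl

theorem KA_hermite_basic_equation_general
    (M N : ℕ) (d : Fin M → ℕ) (j : Fin M) (ε : ℕ) (Etil E' : ℝ)
    (hEtil : Etil = 2 * ((d j : ℝ) + (ε : ℝ) - (N : ℝ)))
    (hE' : E' = 4 * ((N : ℝ) - (ε : ℝ))) :
    XiHermite d *
        (-(Polynomial.derivative (Polynomial.derivative (KAHermite (Function.update d j ε) N))) +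
          2 * Polynomial.X * Polynomial.derivative (KAHermite (Function.update d j ε) N)) +
      2 * Polynomial.derivative (XiHermite d) *
        Polynomial.derivative (KAHermite (Function.update d j ε) N) -
      Polynomial.derivative (Polynomial.derivative (XiHermite d)) *
        KAHermite (Function.update d j ε) N -
      2 * Polynomial.X * Polynomial.derivative (XiHermite d) *
        KAHermite (Function.update d j ε) N +
      Polynomial.C (2 * (M : ℝ) - Etil) * XiHermite d * KAHermite (Function.update d j ε) N
    = Polynomial.C E' * KAHermite d N * XiHermite (Function.update d j ε) := by
  have key := hirotaForm_diffWronskian_update (D := derivative') (x := X)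
    (by simp [derivative'_apply]) j (fun k => isHermiteSolution_hermiteP (d k))
    (isHermiteSolution_hermiteP ε) (isHermiteSolution_hermiteP N)
  have hc : C (2 * (M : ℝ) - Etil) = 2 * (M : ℝ[X]) + 0 - (2 * (d j : ℝ[X]) + 2 * ε - 2 * N) := by
    simp only [hEtil, map_sub, map_mul, map_add, map_ofNat, map_natCast]
    ring
  have hE : C E' = 2 * (2 * (N : ℝ[X]) - 2 * ε) := by
    simp only [hE', map_sub, map_mul, map_ofNat, map_natCast]
    ring
  rw [hc, hE]
  simp only [XiHermite_eq_diffWronskian, KAHermite_eq_diffWronskian, Function.comp_update]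
  exact key

/-- **The basic equation** `Ξ_D·(H̃_D P_{D′,N} − Ẽ(D′)·P_{D′,N}) = ℰ′(D′)·P_{D,N}·Ξ_{D′}`
for the Krein–Adler Hermite system, multiplied through by `Ξ_D` to give a polynomial
identity, with `Ẽ = 2(d_j + ε − N)` and `E′ = 4(N − ε)`. -/
theorem KA_hermite_basic_equation
    (M N : ℕ) (d : Fin M → ℕ) (hpos : ∀ k, 0 < d k) (hmono : StrictMono d)
    (hN : ∀ k, N ≠ d k)
    (j : Fin M) (ε : ℕ) (hε : ε < d j) (hεD : ∀ k, ε ≠ d k)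
    (Etil E' : ℝ)
    (hEtil : Etil = 2 * ((d j : ℝ) + (ε : ℝ) - (N : ℝ)))
    (hE' : E' = 4 * ((N : ℝ) - (ε : ℝ))) :
    XiHermite d *
        (-(Polynomial.derivative (Polynomial.derivative (KAHermite (Function.update d j ε) N))) +
          2 * Polynomial.X * Polynomial.derivative (KAHermite (Function.update d j ε) N)) +
      2 * Polynomial.derivative (XiHermite d) *
        Polynomial.derivative (KAHermite (Function.update d j ε) N) -
      Polynomial.derivative (Polynomial.derivative (XiHermite d)) *
        KAHermite (Function.update d j ε) N -
      2 * Polynomial.X * Polynomial.derivative (XiHermite d) *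
        KAHermite (Function.update d j ε) N +
      Polynomial.C (2 * (M : ℝ) - Etil) * XiHermite d * KAHermite (Function.update d j ε) N
    = Polynomial.C E' * KAHermite d N * XiHermite (Function.update d j ε) :=
  KA_hermite_basic_equation_general M N d j ε Etil E' hEtil hE'
end
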